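/- Let (X,ρ,μ) be a space of homogeneous type satisfying the weak reverse doubling (WRD) condition, let Ω ⊆ X be an open set satisfying the weak measure density (WMD) condition, let 0 < q < p < ∞, and let φ ∈ 𝒢^dec_p satisfy the nearness condition and ∫_r^∞ φ(x,t)/t dt ≤ C_φ·φ(x,r) for all x ∈ X and r > 0. Assume either that there is C̃_φ ∈ [1,∞) with 1/C̃_φ ≤ φ(B)·μ(B)^{1/p} ≤ C̃_φ for every ball B, or that both lim_{r→0⁺} inf_{x∈B} φ(x,r) = ∞ for every ball B and lim_{r→∞} φ(x,r)·μ(B(x,r))^{1/p} = ∞ for every x ∈ X. Then there exist positive constants C and C̃ such that for every measurable f on Ω with inf_{a∈ℝ} ‖f+a‖_{L_{p,φ}(Ω)} < ∞ and with ‖(∫_Ω |f(·)−f(y)|^q/(U(·,y)·ρ(·,y)^{s₀q}) dμ(y))^{1/q}‖_{L_{p,φ}(Ω)} < ∞ for some s₀ ∈ (0,1), one has C·inf_{a∈ℝ}‖f+a‖_{L_{p,φ}(Ω)} ≤ liminf_{s→0⁺} s^{1/q}‖(∫_Ω |f(·)−f(y)|^q/(U(·,y)·ρ(·,y)^{sq})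 dμ(y))^{1/q}‖_{L_{p,φ}(Ω)} ≤ limsup_{s→0⁺} s^{1/q}‖(∫_Ω |f(·)−f(y)|^q/(U(·,y)·ρ(·,y)^{sq}) dμ(y))^{1/q}‖_{L_{p,φ}(Ω)} ≤ C̃·inf_{a∈ℝ}‖f+a‖_{L_{p,φ}(Ω)}. -/

import Mathlib

noncomputable section

open MeasureTheory Filter Set
open scoped ENNReal NNReal Topology

namespace Paper

variable {X : Type*} [MeasurableSpace X]

/-- The ball with center `x` and radius `r` for the quasi-metric `ρ`. -/
def ball (ρ : X → X → ℝ) (x : X) (r : ℝ) : Set X := {y | ρ x y < r}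

/-- `(X, ρ, μ)` is a quasi-metric measure space with quasi-triangle constant `K₀`:
`ρ` is a quasi-metric with constant `K₀` and all `ρ`-balls are `μ`-measurable. -/
structure IsQuasiMetricMeasure (ρ : X → X → ℝ) (μ : Measure X) (K₀ : ℝ) : Prop where
  nonneg : ∀ x y, 0 ≤ ρ x y
  eq_zero_iff : ∀ x y, ρ x y = 0 ↔ x = y
  symm : ∀ x y, ρ x y = ρ y x
  one_le : 1 ≤ K₀
  triangle : ∀ x y z, ρ x z ≤ K₀ * (ρ x y + ρ y z)
  measurableSet_ball : ∀ x r, MeasurableSet (ball ρ x r)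

/-- The doubling condition for `μ` with doubling constant `L ∈ [1, ∞)`. -/
def IsDoubling (ρ : X → X → ℝ) (μ : Measure X) (L : ℝ≥0∞) : Prop :=
  1 ≤ L ∧ L < ∞ ∧ ∀ (x : X) (r : ℝ), 0 < r →
    0 < μ (ball ρ x r) ∧ μ (ball ρ x (2 * r)) ≤ L * μ (ball ρ x r) ∧ μ (ball ρ x r) < ∞

/-- `U(x,y) := min{μ(B(x,ρ(x,y))), μ(B(y,ρ(x,y)))}`. -/
def U (ρ : X → X → ℝ) (μ : Measure X) (x y : X) : ℝ≥0∞ :=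
  min (μ (ball ρ x (ρ x y))) (μ (ball ρ y (ρ x y)))

/-- The weak reverse doubling (WRD) condition. -/
def WRD (ρ : X → X → ℝ) (μ : Measure X) : Prop :=
  ∃ (x₀ : X) (lam C : ℝ), 1 < lam ∧ 1 < C ∧
    ENNReal.ofReal C ≤
      liminf (fun r : ℝ => μ (ball ρ x₀ (lam * r)) / μ (ball ρ x₀ r)) atTop

/-- The weak measure density (WMD) condition for `Ω`. -/
def WMD (ρ : X → X → ℝ) (μ : Measure X) (Ω : Set X) : Prop :=
  ∃ (x₀ : X) (C₀ : ℝ), 0 < C₀ ∧ C₀ ≤ 1 ∧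
    ENNReal.ofReal C₀ ≤
      liminf (fun r : ℝ => μ (ball ρ x₀ r ∩ Ω) / μ (ball ρ x₀ r)) atTop

/-- `Ω` is open with respect to the quasi-metric `ρ`. -/
def IsRhoOpen (ρ : X → X → ℝ) (Ω : Set X) : Prop :=
  ∀ x ∈ Ω, ∃ r : ℝ, 0 < r ∧ ball ρ x r ⊆ Ω

/-- The Maz'ya–Shaposhnikova integrand on a set `E`:
`x ↦ (∫_E |f(x) − f(y)|^q / (U(x,y) ρ(x,y)^{sq}) dμ(y))^{1/q}`. -/
def sob (ρ : X → X → ℝ) (μ : Measure X) (E : Set X) (f : X → ℝ) (q s : ℝ) (x : X) :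
    ℝ≥0∞ :=
  (∫⁻ y in E, ENNReal.ofReal |f x - f y| ^ q /
      (U ρ μ x y * ENNReal.ofReal (ρ x y) ^ (s * q)) ∂μ) ^ (1 / q)

/-- The generalized Morrey quasi-norm `‖g‖_{L_{p,φ}(X)}`. -/
def morreyNorm (ρ : X → X → ℝ) (μ : Measure X) (p : ℝ) (φ : X → ℝ → ℝ)
    (g : X → ℝ≥0∞) : ℝ≥0∞ :=
  ⨆ (x : X) (r : ℝ) (_ : 0 < r),
    ((∫⁻ y in ball ρ x r, g y ^ p ∂μ) / μ (ball ρ x r)) ^ (1 / p) /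
      ENNReal.ofReal (φ x r)

/-- `φ` takes values in `(0,∞)`. -/
def PhiPos (φ : X → ℝ → ℝ) : Prop := ∀ (x : X) (r : ℝ), 0 < r → 0 < φ x r

/-- The nearness condition for `φ`. -/
def Nearness (ρ : X → X → ℝ) (φ : X → ℝ → ℝ) : Prop :=
  ∃ C : ℝ, 1 ≤ C ∧ ∀ (x y : X) (r : ℝ), 0 < r → ρ x y ≤ r → φ x r ≤ C * φ y r

/-- `φ ∈ 𝒢^dec_p`: `r ↦ μ(B(x,r))^{1/p}φ(x,r)` is almost increasing and
`r ↦ φ(x,r)` is almost decreasing. -/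
def GdecP (ρ : X → X → ℝ) (μ : Measure X) (p : ℝ) (φ : X → ℝ → ℝ) : Prop :=
  ∃ C : ℝ, 1 ≤ C ∧ ∀ (x : X) (r s : ℝ), 0 < r → r ≤ s →
    μ (ball ρ x r) ^ (1 / p) * ENNReal.ofReal (φ x r) ≤
        ENNReal.ofReal C * (μ (ball ρ x s) ^ (1 / p) * ENNReal.ofReal (φ x s)) ∧
      φ x s ≤ C * φ x r

/-- The integral condition `∫_r^∞ φ(x,t)/t dt ≤ C_φ φ(x,r)`. -/
def PhiIntCond (φ : X → ℝ → ℝ) (Cφ : ℝ) : Prop :=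
  ∀ (x : X) (r : ℝ), 0 < r →
    IntegrableOn (fun t => φ x t / t) (Set.Ioi r) volume ∧
    (∫ t in Set.Ioi r, φ x t / t) ≤ Cφ * φ x r

lemma add_rpow_le' (a b : ℝ≥0∞) {q : ℝ} (hq : 0 < q) :
    (a + b) ^ q ≤ 2 ^ q * (a ^ q + b ^ q) := by
  rcases le_total a b with h | h
  · calc (a + b) ^ q ≤ (2 * b) ^ q := by
          apply ENNReal.rpow_le_rpow _ hq.le
          rw [two_mul]; gcongr
      _ = 2 ^ q * b ^ q := ENNReal.mul_rpow_of_nonneg _ _ hq.le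
      _ ≤ _ := by gcongr; exact le_add_self
  · calc (a + b) ^ q ≤ (2 * a) ^ q := by
          apply ENNReal.rpow_le_rpow _ hq.le
          rw [two_mul]; gcongr
      _ = 2 ^ q * a ^ q := ENNReal.mul_rpow_of_nonneg _ _ hq.le
      _ ≤ _ := by gcongr; exact le_self_add

lemma rpow_add_rpow_le' (a b : ℝ≥0∞) {p : ℝ} (hp : 0 < p) :
    a ^ p + b ^ p ≤ (2 ^ (1 / p) * (a + b)) ^ p := by
  rw [ENNReal.mul_rpow_of_nonneg _ _ hp.le, ← ENNReal.rpow_mul, one_div_mul_cancel hp.ne',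
    ENNReal.rpow_one, two_mul]
  gcongr
  · exact le_self_add
  · exact le_add_self

/-- combination of integral bounds -/
lemma comb {ν : Measure X} {p : ℝ} (hp : 0 < p) {h u v : X → ℝ≥0∞} {c A B m : ℝ≥0∞}
    (hc : c ≠ ⊤) (hv : Measurable v) (hh : ∀ᵐ x ∂ν, h x ≤ c * (u x + v x))
    (hu : ∫⁻ x, u x ^ p ∂ν ≤ A ^ p * m) (hv' : ∫⁻ x, v x ^ p ∂ν ≤ B ^ p * m) :
    ∫⁻ x, h x ^ p ∂ν ≤ (c * 2 * 2 ^ (1 / p) * (A + B)) ^ p * m := by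
  have h2 : (2 : ℝ≥0∞) ^ p ≠ ⊤ := by simp [hp.le]
  have hcp : c ^ p ≠ ⊤ := ENNReal.rpow_ne_top_of_nonneg hp.le hc
  calc ∫⁻ x, h x ^ p ∂ν ≤ ∫⁻ x, c ^ p * (2 ^ p * (u x ^ p + v x ^ p)) ∂ν := by
        apply lintegral_mono_ae
        filter_upwards [hh] with x hx
        calc h x ^ p ≤ (c * (u x + v x)) ^ p := ENNReal.rpow_le_rpow hx hp.le
          _ = c ^ p * (u x + v x) ^ p := ENNReal.mul_rpow_of_nonneg _ _ hp.le
          _ ≤ _ := by gcongr; exact add_rpow_le' _ _ hp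
    _ = c ^ p * (2 ^ p * (∫⁻ x, u x ^ p ∂ν + ∫⁻ x, v x ^ p ∂ν)) := by
        rw [lintegral_const_mul' _ _ hcp, lintegral_const_mul' _ _ h2,
          lintegral_add_right _ (hv.pow_const p)]
    _ ≤ c ^ p * (2 ^ p * (A ^ p * m + B ^ p * m)) := by gcongr
    _ = c ^ p * (2 ^ p * (A ^ p + B ^ p)) * m := by ring
    _ ≤ c ^ p * (2 ^ p * (2 ^ (1 / p) * (A + B)) ^ p) * m := by
        gcongr; exact rpow_add_rpow_le' _ _ hp
    _ = _ := by
        rw [← ENNReal.mul_rpow_of_nonneg _ _ hp.le, ← ENNReal.mul_rpow_of_nonneg _ _ hp.le]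
        congr 2; ring

lemma jensen {ν : Measure X} {t : ℝ} (ht : 1 < t) {g : X → ℝ≥0∞} (hg : Measurable g) :
    (∫⁻ x, g x ∂ν) ^ t ≤ ν univ ^ (t - 1) * ∫⁻ x, g x ^ t ∂ν := by
  have hc := Real.HolderConjugate.conjExponent ht
  have h := ENNReal.lintegral_mul_le_Lp_mul_Lq ν hc hg.aemeasurable
    (aemeasurable_const (b := (1 : ℝ≥0∞)))
  simp only [Pi.mul_apply, mul_one, ENNReal.one_rpow, lintegral_one] at h
  have ht0 : 0 < t := by linarith
  calc (∫⁻ x, g x ∂ν) ^ t ≤ ((∫⁻ x, g x ^ t ∂ν) ^ (1 / t) *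
        ν univ ^ (1 / t.conjExponent)) ^ t := ENNReal.rpow_le_rpow h ht0.le
    _ = _ := by
      rw [ENNReal.mul_rpow_of_nonneg _ _ ht0.le, ← ENNReal.rpow_mul, ← ENNReal.rpow_mul,
        one_div_mul_cancel ht0.ne', ENNReal.rpow_one, mul_comm]
      congr 2
      rw [Real.conjExponent]; field_simp

lemma morrey_le_iff {ρ : X → X → ℝ} {μ : Measure X} {L : ℝ≥0∞} (hL : IsDoubling ρ μ L)
    {p : ℝ} (hp : 0 < p) {φ : X → ℝ → ℝ} (hφ : PhiPos φ) {g : X → ℝ≥0∞} {N : ℝ≥0∞} :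
    morreyNorm ρ μ p φ g ≤ N ↔ ∀ x r, 0 < r →
      ∫⁻ y in ball ρ x r, g y ^ p ∂μ ≤ (N * ENNReal.ofReal (φ x r)) ^ p * μ (ball ρ x r) := by
  simp only [morreyNorm, iSup_le_iff]
  refine forall_congr' fun x => forall_congr' fun r => forall_congr' fun hr => ?_
  have h1 := hL.2.2 x r hr
  have hφ' : ENNReal.ofReal (φ x r) ≠ 0 := by simpa using hφ x r hr
  rw [ENNReal.div_le_iff hφ' ENNReal.ofReal_ne_top, one_div,
    ENNReal.rpow_inv_le_iff hp, ENNReal.div_le_iff h1.1.ne' h1.2.2.ne]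

lemma dbl2 {ρ : X → X → ℝ} {μ : Measure X} {K₀ : ℝ} {L : ℝ≥0∞} (hX : IsQuasiMetricMeasure ρ μ K₀)
    (hL : IsDoubling ρ μ L) (c : ℝ) : ∃ D : ℝ≥0∞, 1 ≤ D ∧ D ≠ ⊤ ∧ ∀ x y r, 0 < r →
      ρ x y ≤ c * r → μ (ball ρ x (c * r)) ≤ D * μ (ball ρ y r) := by
  have h0 : ∀ n : ℕ, ∀ y r, 0 < r → μ (ball ρ y (2 ^ n * r)) ≤ L ^ n * μ (ball ρ y r) := by
    intro n
    induction n with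
    | zero => intro y r hr; simp
    | succ n ih =>
      intro y r hr
      have := (hL.2.2 y (2 ^ n * r) (by positivity)).2.1
      calc μ (ball ρ y (2 ^ (n + 1) * r)) = μ (ball ρ y (2 * (2 ^ n * r))) := by
            congr 2; ring
        _ ≤ L * μ (ball ρ y (2 ^ n * r)) := this
        _ ≤ L * (L ^ n * μ (ball ρ y r)) := by gcongr; exact ih y r hr
        _ = _ := by ring
  obtain ⟨n, hn⟩ := pow_unbounded_of_one_lt (K₀ * (2 * c)) (one_lt_two)
  refine ⟨L ^ n, one_le_pow₀ hL.1, ENNReal.pow_ne_top hL.2.1.ne, fun x y r hr hxy => ?_⟩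
  refine le_trans (measure_mono ?_) (h0 n y r hr)
  intro z hz
  simp only [ball, mem_setOf_eq] at hz ⊢
  have h1 := hX.triangle y x z
  have hK := hX.one_le
  have h2 : K₀ * (ρ y x + ρ x z) ≤ K₀ * (2 * c * r) := by
    apply mul_le_mul_of_nonneg_left _ (by linarith)
    rw [hX.symm y x]; linarith
  have h3 : K₀ * (2 * c) * r < 2 ^ n * r := by gcongr
  nlinarith

lemma ball_mono {ρ : X → X → ℝ} {x : X} {r s : ℝ} (h : r ≤ s) : ball ρ x r ⊆ ball ρ x s :=
  fun _ hy => lt_of_lt_of_le hy h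

lemma meas_rho {ρ : X → X → ℝ} {μ : Measure X} {K₀ : ℝ} (hX : IsQuasiMetricMeasure ρ μ K₀)
    (x : X) : Measurable (ρ x) :=
  measurable_of_Iio fun r => hX.measurableSet_ball x r

lemma sfin [Nonempty X] {ρ : X → X → ℝ} {μ : Measure X} {K₀ : ℝ} {L : ℝ≥0∞}
    (hX : IsQuasiMetricMeasure ρ μ K₀) (hL : IsDoubling ρ μ L) : SigmaFinite μ := by
  obtain ⟨x⟩ := ‹Nonempty X›
  refine ⟨⟨⟨fun n : ℕ => ball ρ x (n + 1), fun _ => trivial, fun n =>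
    (hL.2.2 x (n + 1) (by positivity)).2.2, ?_⟩⟩⟩
  ext y
  simp only [mem_iUnion, mem_univ, iff_true]
  obtain ⟨n, hn⟩ := exists_nat_gt (ρ x y)
  exact ⟨n, show ρ x y < n + 1 by linarith⟩

lemma exists_E [Nonempty X] {ρ : X → X → ℝ} {μ : Measure X} {K₀ : ℝ} {L : ℝ≥0∞}
    (hX : IsQuasiMetricMeasure ρ μ K₀) (hL : IsDoubling ρ μ L) (R : ℝ) (hR : 0 < R) :
    ∃ E : Set (X × X), MeasurableSet E ∧ (∀ x y, ρ x y < R → (x, y) ∈ E) ∧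
      ∀ x y, (x, y) ∈ E → ρ x y < 6 * K₀ ^ 3 * R := by
  have hK := hX.one_le
  have hσ := sfin hX hL
  obtain ⟨D, hD⟩ := zorn_subset {D : Set X | D.Pairwise fun x y => 2 * K₀ * R ≤ ρ x y} (by
    intro c hc hchain
    refine ⟨⋃₀ c, ?_, fun s hs => subset_sUnion_of_mem hs⟩
    exact (pairwise_sUnion hchain.directedOn).2 hc)
  have hDp : D.Pairwise fun x y => 2 * K₀ * R ≤ ρ x y := hD.prop
  have hcount : D.Countable := by
    have hdisj : Pairwise (Function.onFun Disjoint fun d : D => ball ρ d.1 R) := by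
      intro d d' hdd
      refine Set.disjoint_left.2 fun y hy hy' => ?_
      have h1 := hDp d.2 d'.2 (fun h => hdd (Subtype.ext h))
      simp only [ball, mem_setOf_eq] at hy hy'
      have h2 := hX.triangle d.1 y d'.1
      rw [hX.symm y d'.1] at h2
      nlinarith
    have := Measure.countable_meas_pos_of_disjoint_iUnion (μ := μ)
      (fun d : D => hX.measurableSet_ball d.1 R) hdisj
    have h3 : {d : D | 0 < μ (ball ρ d.1 R)} = univ := by
      ext d; simpa using (hL.2.2 d.1 R hR).1
    rw [h3] at this
    exact Set.countable_coe_iff.1 (Set.countable_univ_iff.1 this)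
  have hcov : ∀ x, ∃ d ∈ D, ρ d x < 2 * K₀ * R := by
    intro x
    by_contra! hcon
    have hx : x ∈ D := by
      have hmem : insert x D ∈ {D : Set X | D.Pairwise fun x y => 2 * K₀ * R ≤ ρ x y} := by
        refine hDp.insert ?_
        intro d hd _
        exact ⟨by rw [hX.symm]; exact hcon d hd, hcon d hd⟩
      exact hD.le_of_ge hmem (subset_insert _ _) (mem_insert _ _)
    have := hcon x hx
    rw [(hX.eq_zero_iff x x).2 rfl] at this
    have : 0 < 2 * K₀ * R := by positivity
    linarith
  refine ⟨⋃ d ∈ D, ball ρ d (3 * K₀ ^ 2 * R) ×ˢ ball ρ d (3 * K₀ ^ 2 * R), ?_, ?_, ?_⟩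
  · exact MeasurableSet.biUnion hcount fun d _ =>
      (hX.measurableSet_ball _ _).prod (hX.measurableSet_ball _ _)
  · intro x y hxy
    obtain ⟨d, hd, hdx⟩ := hcov x
    simp only [mem_iUnion]
    refine ⟨d, hd, ?_, ?_⟩
    · show ρ d x < _
      have : K₀ * R ≤ K₀ ^ 2 * R := by
        apply mul_le_mul_of_nonneg_right _ hR.le; nlinarith
      nlinarith
    · show ρ d y < _
      have h2 := hX.triangle d x y
      have h3 : K₀ * (ρ d x + ρ x y) < K₀ * (2 * K₀ * R + R) := by gcongr
      have : K₀ * R ≤ K₀ ^ 2 * R := by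
        apply mul_le_mul_of_nonneg_right _ hR.le; nlinarith
      nlinarith
  · intro x y hxy
    simp only [mem_iUnion] at hxy
    obtain ⟨d, hd, h1, h2⟩ := hxy
    replace h1 : ρ d x < 3 * K₀ ^ 2 * R := h1
    replace h2 : ρ d y < 3 * K₀ ^ 2 * R := h2
    have h4 := hX.triangle x d y
    rw [hX.symm x d] at h4
    have h3 : K₀ * (ρ d x + ρ d y) < K₀ * (3 * K₀ ^ 2 * R + 3 * K₀ ^ 2 * R) := by gcongr
    nlinarith

lemma annuli [Nonempty X] {ρ : X → X → ℝ} {μ : Measure X} {K₀ : ℝ} {L : ℝ≥0∞}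
    (hX : IsQuasiMetricMeasure ρ μ K₀) (hL : IsDoubling ρ μ L) (hWRD : WRD ρ μ) {Ω : Set X}
    (hWMD : WMD ρ μ Ω) : ∃ (x₁ : X) (Λ R₀ : ℝ) (c : ℝ≥0∞), 1 < Λ ∧ 0 < R₀ ∧ c ≠ ⊤ ∧
      ∀ R, R₀ ≤ R → μ (ball ρ x₁ (Λ * R)) ≤
        c * μ ((ball ρ x₁ (Λ * R) \ ball ρ x₁ R) ∩ Ω) := by
  have hK := hX.one_le
  obtain ⟨x₀, lam, C, hlam, hC, h1⟩ := hWRD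
  obtain ⟨x₁, C₀, hC0, -, h2⟩ := hWMD
  obtain ⟨C', hC'1, hC'2⟩ := exists_between hC
  have e1 := eventually_lt_of_lt_liminf
    (lt_of_lt_of_le ((ENNReal.ofReal_lt_ofReal_iff (by linarith)).2 hC'2) h1)
  have e2 := eventually_lt_of_lt_liminf
    (lt_of_lt_of_le ((ENNReal.ofReal_lt_ofReal_iff hC0).2 (half_lt_self hC0)) h2)
  obtain ⟨r1, hr1⟩ := eventually_atTop.1 e1
  obtain ⟨r2, hr2⟩ := eventually_atTop.1 e2
  set R₀ := max (max r1 r2) (max 1 (ρ x₀ x₁)) with hR₀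
  have hR1 : r1 ≤ R₀ := le_trans (le_max_left _ _) (le_max_left _ _)
  have hR2 : r2 ≤ R₀ := le_trans (le_max_right _ _) (le_max_left _ _)
  have hR3 : 1 ≤ R₀ := le_trans (le_max_left _ _) (le_max_right _ _)
  have hR4 : ρ x₀ x₁ ≤ R₀ := le_trans (le_max_right _ _) (le_max_right _ _)
  set c₀ := ENNReal.ofReal (C₀ / 2) with hc₀
  have hc₀0 : c₀ ≠ 0 := by simpa [hc₀] using hC0
  have hc₀t : c₀ ≠ ⊤ := ENNReal.ofReal_ne_top
  have hit : ∀ m : ℕ, ∀ r, R₀ ≤ r →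
      ENNReal.ofReal C' ^ m * μ (ball ρ x₀ r) ≤ μ (ball ρ x₀ (lam ^ m * r)) := by
    intro m
    induction m with
    | zero => intro r hr; simp
    | succ m ih =>
      intro r hr
      have hr0 : 0 < r := by linarith
      have hlm : 1 ≤ lam ^ m := one_le_pow₀ hlam.le
      have hle : r ≤ lam ^ m * r := le_mul_of_one_le_left hr0.le hlm
      have hd := hL.2.2 x₀ (lam ^ m * r) (by positivity)
      have h3 := (hr1 (lam ^ m * r) (by linarith)).le
      rw [ENNReal.le_div_iff_mul_le (Or.inl hd.1.ne') (Or.inl hd.2.2.ne)] at h3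
      calc ENNReal.ofReal C' ^ (m + 1) * μ (ball ρ x₀ r)
          = ENNReal.ofReal C' * (ENNReal.ofReal C' ^ m * μ (ball ρ x₀ r)) := by ring
        _ ≤ ENNReal.ofReal C' * μ (ball ρ x₀ (lam ^ m * r)) := by gcongr; exact ih r hr
        _ ≤ _ := h3
        _ = _ := by congr 2; ring
  obtain ⟨m, hm⟩ : ∃ m : ℕ, 2 ≤ c₀ * ENNReal.ofReal C' ^ m := by
    obtain ⟨m, hm⟩ := pow_unbounded_of_one_lt (2 / (C₀ / 2)) hC'1
    refine ⟨m, ?_⟩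
    rw [hc₀, ← ENNReal.ofReal_pow (by linarith), ← ENNReal.ofReal_mul (by linarith)]
    rw [show (2 : ℝ≥0∞) = ENNReal.ofReal 2 by simp]
    apply ENNReal.ofReal_le_ofReal
    rw [div_lt_iff₀ (by linarith)] at hm
    linarith
  have hlm : 1 ≤ lam ^ m := one_le_pow₀ hlam.le
  refine ⟨x₁, 2 * K₀ * (lam ^ m * (2 * K₀)), R₀, 2 * c₀⁻¹, ?_, by linarith,
    ENNReal.mul_ne_top (by simp) (by simpa using hc₀0), ?_⟩
  · nlinarith [mul_le_mul hK hK (by norm_num) (by linarith)]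
  intro R hR
  set Λ := 2 * K₀ * (lam ^ m * (2 * K₀)) with hΛ
  have hΛ1 : 1 ≤ Λ := by nlinarith [mul_le_mul hK hK (by norm_num) (by linarith)]
  have hRp : 0 < R := by linarith
  have hRΛ : R ≤ Λ * R := le_mul_of_one_le_left hRp.le hΛ1
  have hb := hL.2.2 x₁ R hRp
  have hB := hL.2.2 x₁ (Λ * R) (by positivity)
  have s1 : ball ρ x₁ R ⊆ ball ρ x₀ (2 * K₀ * R) := by
    intro y hy
    simp only [ball, mem_ofPred_eq] at hy ⊢
    have := hX.triangle x₀ x₁ y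
    nlinarith
  have s2 : ball ρ x₀ (lam ^ m * (2 * K₀ * R)) ⊆ ball ρ x₁ (Λ * R) := by
    intro y hy
    simp only [ball, mem_ofPred_eq] at hy ⊢
    have := hX.triangle x₁ x₀ y
    rw [hX.symm x₁ x₀] at this
    have h5 : R ≤ lam ^ m * (2 * K₀ * R) := by
      have : 1 ≤ lam ^ m * (2 * K₀) := by nlinarith
      nlinarith
    have h6 : K₀ * (ρ x₀ x₁ + ρ x₀ y) < K₀ * (2 * (lam ^ m * (2 * K₀ * R))) := by
      gcongr; linarith
    rw [hΛ]; nlinarith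
  have h4 : 2 * μ (ball ρ x₁ R) ≤ c₀ * μ (ball ρ x₁ (Λ * R)) := by
    calc 2 * μ (ball ρ x₁ R) ≤ (c₀ * ENNReal.ofReal C' ^ m) * μ (ball ρ x₀ (2 * K₀ * R)) := by
          gcongr
      _ = c₀ * (ENNReal.ofReal C' ^ m * μ (ball ρ x₀ (2 * K₀ * R))) := by ring
      _ ≤ c₀ * μ (ball ρ x₀ (lam ^ m * (2 * K₀ * R))) := by
          gcongr; exact hit m _ (by nlinarith)
      _ ≤ _ := by gcongr
  have h5 := (hr2 (Λ * R) (by linarith)).le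
  rw [ENNReal.le_div_iff_mul_le (Or.inl hB.1.ne') (Or.inl hB.2.2.ne)] at h5
  have h6 : μ (ball ρ x₁ (Λ * R) ∩ Ω) ≤
      μ ((ball ρ x₁ (Λ * R) \ ball ρ x₁ R) ∩ Ω) + μ (ball ρ x₁ R) := by
    refine le_trans (measure_mono ?_) (measure_union_le _ _)
    intro y hy
    by_cases h : y ∈ ball ρ x₁ R
    · exact Or.inr h
    · exact Or.inl ⟨⟨hy.1, h⟩, hy.2⟩
  have h7 : μ (ball ρ x₁ R) ≤ μ ((ball ρ x₁ (Λ * R) \ ball ρ x₁ R) ∩ Ω) := by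
    have := (h4.trans h5).trans h6
    rw [two_mul] at this
    exact (ENNReal.add_le_add_iff_right hb.2.2.ne).1 this
  have h8 : c₀ * μ (ball ρ x₁ (Λ * R)) ≤
      2 * μ ((ball ρ x₁ (Λ * R) \ ball ρ x₁ R) ∩ Ω) := by
    rw [two_mul]
    exact (h5.trans h6).trans (by gcongr)
  calc μ (ball ρ x₁ (Λ * R)) = c₀⁻¹ * (c₀ * μ (ball ρ x₁ (Λ * R))) := by
        rw [← mul_assoc, ENNReal.inv_mul_cancel hc₀0 hc₀t, one_mul]
    _ ≤ c₀⁻¹ * (2 * μ ((ball ρ x₁ (Λ * R) \ ball ρ x₁ R) ∩ Ω)) := by gcongr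
    _ = _ := by ring

lemma phi_tendsto {ρ : X → X → ℝ} {μ : Measure X} {p : ℝ} {φ : X → ℝ → ℝ}
    (hφpos : PhiPos φ) (hφG : GdecP ρ μ p φ) {Cφ : ℝ} (hφI : PhiIntCond φ Cφ) (x : X) :
    Tendsto (φ x) atTop (𝓝 0) := by
  obtain ⟨C, hC, hG⟩ := hφG
  have key : ∀ ε > 0, ∃ R, ∀ r ≥ R, φ x r < ε := by
    intro ε hε
    by_contra! hcon
    have hlow : ∀ t, 0 < t → ε / C ≤ φ x t := by
      intro t ht
      obtain ⟨r, hr, hr'⟩ := hcon t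
      have := (hG x t r ht hr).2
      rw [div_le_iff₀ (by linarith)]
      linarith
    have hi := (hφI x 1 one_pos).1
    have : IntegrableOn (fun t : ℝ => (C / ε) * (φ x t / t)) (Ioi 1) volume := hi.const_mul _
    refine not_integrableOn_Ioi_inv (a := 1) ?_
    refine Integrable.mono' this measurable_inv.aestronglyMeasurable ?_
    filter_upwards [ae_restrict_mem measurableSet_Ioi] with t ht
    have ht0 : (0 : ℝ) < t := lt_trans one_pos ht
    have := hlow t ht0
    rw [Real.norm_eq_abs, abs_of_pos (inv_pos.2 ht0)]
    rw [div_le_iff₀ (by linarith)] at this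
    rw [← mul_div_assoc, inv_eq_one_div]
    gcongr
    rw [div_mul_eq_mul_div, le_div_iff₀ hε]
    linarith
  rw [Metric.tendsto_atTop]
  intro ε hε
  obtain ⟨R, hR⟩ := key ε hε
  refine ⟨max R 1, fun r hr => ?_⟩
  have h1 := hR r (le_trans (le_max_left _ _) hr)
  have h2 := hφpos x r (lt_of_lt_of_le one_pos (le_trans (le_max_right _ _) hr))
  rw [Real.dist_eq, sub_zero, abs_of_pos h2]
  exact h1

lemma series_lower {Λ A q : ℝ} (hΛ : 1 < Λ) (hA : 0 < A) (hq : 0 < q) :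
    ∀ᶠ s in 𝓝[>] (0 : ℝ),
      (∑' k : ℕ, ENNReal.ofReal (A * Λ ^ k) ^ (-(s * q)))⁻¹ ≤
        ENNReal.ofReal (2 * q * Real.log Λ) * ENNReal.ofReal s ∧
      (∑' k : ℕ, ENNReal.ofReal (A * Λ ^ k) ^ (-(s * q))) ≠ ⊤ := by
  have hΛ0 : 0 < Λ := by linarith
  have hlog : 0 < Real.log Λ := Real.log_pos hΛ
  have ht : ∀ᶠ s in 𝓝[>] (0 : ℝ), A ^ (s * q) < 2 := by
    have : Tendsto (fun s : ℝ => A ^ (s * q)) (𝓝 0) (𝓝 (A ^ ((0 : ℝ) * q))) := by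
      apply Tendsto.rpow tendsto_const_nhds (tendsto_id.mul_const q)
      exact Or.inl hA.ne'
    rw [zero_mul, Real.rpow_zero] at this
    exact (this.mono_left nhdsWithin_le_nhds).eventually (gt_mem_nhds (by norm_num))
  filter_upwards [ht, self_mem_nhdsWithin] with s hs1 hs0
  replace hs0 : 0 < s := hs0
  have hsq : 0 < s * q := by positivity
  set y : ℝ := Λ ^ (-(s * q)) with hy
  have hy0 : 0 < y := Real.rpow_pos_of_pos hΛ0 _
  have hy1 : y < 1 := Real.rpow_lt_one_of_one_lt_of_neg hΛ (by linarith)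
  have hyle : 1 - y ≤ s * q * Real.log Λ := by
    have := Real.add_one_le_exp (Real.log Λ * (-(s * q)))
    rw [← Real.rpow_def_of_pos hΛ0] at this
    rw [hy]; linarith
  have hsum : (∑' k : ℕ, ENNReal.ofReal (A * Λ ^ k) ^ (-(s * q))) =
      ENNReal.ofReal (A ^ (-(s * q))) * ENNReal.ofReal (1 - y)⁻¹ := by
    rw [ENNReal.ofReal_inv_of_pos (by linarith), ENNReal.ofReal_sub _ hy0.le, ENNReal.ofReal_one,
      ← ENNReal.tsum_geometric, ← ENNReal.tsum_mul_left]
    congr 1; ext k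
    rw [ENNReal.ofReal_rpow_of_pos (by positivity), ← ENNReal.ofReal_pow hy0.le,
      ← ENNReal.ofReal_mul (Real.rpow_pos_of_pos hA _).le,
      Real.mul_rpow hA.le (by positivity), hy, ← Real.rpow_natCast, ← Real.rpow_natCast,
      ← Real.rpow_mul hΛ0.le, ← Real.rpow_mul hΛ0.le, mul_comm (k : ℝ)]
  have hAp : 0 < A ^ (s * q) := Real.rpow_pos_of_pos hA _
  rw [hsum, ← ENNReal.ofReal_mul (Real.rpow_pos_of_pos hA _).le]
  refine ⟨?_, ENNReal.ofReal_ne_top⟩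
  rw [Real.rpow_neg hA.le, ← ENNReal.ofReal_inv_of_pos
    (mul_pos (inv_pos.2 hAp) (inv_pos.2 (by linarith))), ← ENNReal.ofReal_mul (by positivity)]
  apply ENNReal.ofReal_le_ofReal
  rw [mul_inv, inv_inv, inv_inv]
  calc A ^ (s * q) * (1 - y) ≤ 2 * (s * q * Real.log Λ) := by
        apply mul_le_mul hs1.le hyle (by linarith) (by norm_num)
    _ = _ := by ring

lemma avgq {ρ : X → X → ℝ} {μ : Measure X} {L : ℝ≥0∞} (hL : IsDoubling ρ μ L)
    {p q : ℝ} (hq : 0 < q) (hqp : q < p) {φ : X → ℝ → ℝ} (hφ : PhiPos φ) {g : X → ℝ≥0∞}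
    (hg : Measurable g) (x : X) (r : ℝ) (hr : 0 < r) :
    ∫⁻ y in ball ρ x r, g y ^ q ∂μ ≤
      (morreyNorm ρ μ p φ g * ENNReal.ofReal (φ x r)) ^ q * μ (ball ρ x r) := by
  have hp : 0 < p := hq.trans hqp
  have h := (morrey_le_iff hL hp hφ).1 (le_refl (morreyNorm ρ μ p φ g)) x r hr
  have hb := hL.2.2 x r hr
  have ht : 1 < p / q := (one_lt_div hq).2 hqp
  have hj := jensen (ν := μ.restrict (ball ρ x r)) ht (hg.pow_const q)
  rw [← ENNReal.rpow_le_rpow_iff (z := p / q) (by linarith)]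
  refine hj.trans ?_
  simp only [← ENNReal.rpow_mul, mul_div_cancel₀ p hq.ne', Measure.restrict_apply_univ]
  rw [ENNReal.mul_rpow_of_nonneg _ _ (by linarith), ← ENNReal.rpow_mul, mul_div_cancel₀ p hq.ne']
  calc _ ≤ μ (ball ρ x r) ^ (p / q - 1) * ((morreyNorm ρ μ p φ g * ENNReal.ofReal (φ x r)) ^ p
        * μ (ball ρ x r)) := by gcongr
    _ = (morreyNorm ρ μ p φ g * ENNReal.ofReal (φ x r)) ^ p *
        (μ (ball ρ x r) ^ (p / q - 1) * μ (ball ρ x r) ^ (1 : ℝ)) := by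
        rw [ENNReal.rpow_one]; ring
    _ = _ := by
        rw [← ENNReal.rpow_add _ _ hb.1.ne' hb.2.2.ne, sub_add_cancel]

lemma sob_shift (ρ : X → X → ℝ) (μ : Measure X) (E : Set X) (f : X → ℝ) (q s a : ℝ) :
    sob ρ μ E (fun x => f x + a) q s = sob ρ μ E f q s := by
  funext x
  simp only [sob, add_sub_add_right_eq_sub]

lemma sob_rpow (ρ : X → X → ℝ) (μ : Measure X) (E : Set X) (f : X → ℝ) {q : ℝ} (hq : 0 < q)
    (s : ℝ) (x : X) : sob ρ μ E f q s x ^ q = ∫⁻ y in E, ENNReal.ofReal |f x - f y| ^ q /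
      (U ρ μ x y * ENNReal.ofReal (ρ x y) ^ (s * q)) ∂μ := by
  rw [sob, ← ENNReal.rpow_mul, one_div_mul_cancel hq.ne', ENNReal.rpow_one]

lemma lower_pt [Nonempty X] {ρ : X → X → ℝ} {μ : Measure X} {K₀ : ℝ} {L : ℝ≥0∞}
    (hX : IsQuasiMetricMeasure ρ μ K₀) (hL : IsDoubling ρ μ L) (hWRD : WRD ρ μ)
    {Ω : Set X} (hΩm : MeasurableSet Ω) (hWMD : WMD ρ μ Ω)
    {p q : ℝ} (hq : 0 < q) (hqp : q < p)
    {φ : X → ℝ → ℝ} (hφpos : PhiPos φ) (hφG : GdecP ρ μ p φ)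
    {Cφ : ℝ} (hφI : PhiIntCond φ Cφ) :
    ∃ C : ℝ≥0∞, C ≠ ⊤ ∧ ∀ f : X → ℝ, Measurable f →
      morreyNorm ρ μ p φ (Ω.indicator fun x => ENNReal.ofReal |f x|) ≠ ⊤ →
      ∀ z r, ∀ ε : ℝ≥0∞, ε ≠ 0 → ∀ᶠ s in 𝓝[>] (0 : ℝ), ∀ x ∈ ball ρ z r,
        ENNReal.ofReal |f x| ≤ C * (ENNReal.ofReal s ^ (1 / q) * sob ρ μ Ω f q s x + ε) := by
  have hK := hX.one_le
  obtain ⟨x₁, Λ, R₀, c, hΛ, hR₀, hc, hann⟩ := annuli hX hL hWRD hWMD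
  obtain ⟨D, hD1, hDt, hD⟩ := dbl2 hX hL (2 * K₀)
  set C₂ := ENNReal.ofReal (2 * q * Real.log Λ) with hC₂
  set C₃ := c * 2 ^ q * D * C₂ with hC₃
  set C₄ := c * (2 : ℝ≥0∞) ^ q with hC₄
  have h2q : (2 : ℝ≥0∞) ^ q ≠ ⊤ := ENNReal.rpow_ne_top_of_nonneg hq.le (by simp)
  have hC₄t : C₄ ≠ ⊤ := ENNReal.mul_ne_top hc h2q
  have hC₃t : C₃ ≠ ⊤ := ENNReal.mul_ne_top (ENNReal.mul_ne_top hC₄t hDt) ENNReal.ofReal_ne_top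
  have hq1 : 0 < 1 / q := by positivity
  refine ⟨2 ^ (1 / q) * (C₃ ^ (1 / q) + C₄ ^ (1 / q)), ENNReal.mul_ne_top
    (ENNReal.rpow_ne_top_of_nonneg hq1.le (by simp)) (ENNReal.add_ne_top.2
    ⟨ENNReal.rpow_ne_top_of_nonneg hq1.le hC₃t, ENNReal.rpow_ne_top_of_nonneg hq1.le hC₄t⟩), ?_⟩
  intro f hf hN z r ε hε
  set g := Ω.indicator fun x => ENNReal.ofReal |f x| with hg
  set Nn := morreyNorm ρ μ p φ g with hNn
  have hgm : Measurable g := by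
    apply Measurable.indicator _ hΩm
    exact (continuous_abs.measurable.comp hf).ennreal_ofReal
  have hΛ0 : 0 < Λ := by linarith
  -- choice of N
  have hη : ε ^ q ≠ 0 := by simp [hε, hq.le]
  have ev1 : ∀ᶠ R in atTop, (Nn * ENNReal.ofReal (φ x₁ (Λ * R))) ^ q ≤ ε ^ q := by
    have t1 : Tendsto (fun R => φ x₁ (Λ * R)) atTop (𝓝 0) :=
      (phi_tendsto hφpos hφG hφI x₁).comp (tendsto_id.const_mul_atTop hΛ0)
    have t2 := ENNReal.tendsto_ofReal t1
    have t3 := ENNReal.Tendsto.const_mul (a := Nn) t2 (Or.inr hN)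
    rw [ENNReal.ofReal_zero, mul_zero] at t3
    filter_upwards [t3.eventually (gt_mem_nhds (pos_iff_ne_zero.2 hε))] with R hR
    exact ENNReal.rpow_le_rpow hR.le hq.le
  set M := K₀ * (r + ρ z x₁) with hM
  obtain ⟨R₁, hR₁⟩ := eventually_atTop.1
    (ev1.and ((eventually_ge_atTop R₀).and (eventually_ge_atTop M)))
  obtain ⟨N, hNN⟩ := pow_unbounded_of_one_lt R₁ hΛ
  have hbig : ∀ k : ℕ, R₁ ≤ Λ ^ (N + k) := fun k =>
    hNN.le.trans (pow_le_pow_right₀ hΛ.le (Nat.le_add_right _ _))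
  have hA : 0 < 2 * K₀ * Λ ^ (N + 1) := by positivity
  filter_upwards [series_lower hΛ hA hq, self_mem_nhdsWithin] with s hs hs0 x hx
  replace hs0 : 0 < s := hs0
  obtain ⟨hs1, hs2⟩ := hs
  set w : ℕ → ℝ≥0∞ := fun k => ENNReal.ofReal (2 * K₀ * Λ ^ (N + 1) * Λ ^ k) ^ (-(s * q)) with hw
  set A : ℕ → Set X := fun k =>
    (ball ρ x₁ (Λ * Λ ^ (N + k)) \ ball ρ x₁ (Λ ^ (N + k))) ∩ Ω with hAdef
  have hAm : ∀ k, MeasurableSet (A k) := fun k =>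
    ((hX.measurableSet_ball _ _).diff (hX.measurableSet_ball _ _)).inter hΩm
  set F : X → ℝ≥0∞ := fun y => ENNReal.ofReal |f x - f y| ^ q /
      (U ρ μ x y * ENNReal.ofReal (ρ x y) ^ (s * q)) with hF
  have hdisj : Pairwise (Function.onFun Disjoint A) := by
    have : ∀ j k : ℕ, j < k → Disjoint (A j) (A k) := by
      intro j k hjk
      refine Set.disjoint_left.2 fun y hy hy' => hy'.1.2 ?_
      refine ball_mono ?_ hy.1.1
      rw [← pow_succ']
      exact pow_le_pow_right₀ hΛ.le (by omega)
    intro j k hjk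
    rcases lt_or_gt_of_ne hjk with h | h
    · exact this j k h
    · exact (this k j h).symm
  have hsumF : ∑' k, ∫⁻ y in A k, F y ∂μ ≤ sob ρ μ Ω f q s x ^ q := by
    rw [sob_rpow _ _ _ _ hq, ← lintegral_iUnion hAm hdisj]
    exact lintegral_mono_set (iUnion_subset fun k => inter_subset_right)
  have hxM : ρ x x₁ ≤ M := by
    have h1 := hX.triangle x z x₁
    have h2 : ρ z x < r := hx
    rw [hX.symm x z] at h1
    have : K₀ * (ρ z x + ρ z x₁) ≤ K₀ * (r + ρ z x₁) := by gcongr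
    linarith
  have hwk : ∀ k, ENNReal.ofReal |f x| ^ q * w k ≤
      C₄ * D * ∫⁻ y in A k, F y ∂μ + C₄ * ε ^ q * w k := by
    intro k
    set R := Λ ^ (N + k) with hR
    have hRp : 0 < R := by positivity
    obtain ⟨p1, p2, p3⟩ := hR₁ R (hbig k)
    have hRΛ : R ≤ Λ * R := le_mul_of_one_le_left hRp.le hΛ.le
    have hB := hL.2.2 x₁ (Λ * R) (by positivity)
    set m := μ (ball ρ x₁ (Λ * R)) with hm
    have hdm : Measurable fun y => ENNReal.ofReal |f x - f y| ^ q :=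
      ((continuous_abs.measurable.comp (measurable_const.sub hf)).ennreal_ofReal).pow_const q
    -- integral of f over annulus
    have i1 : ∫⁻ y in A k, ENNReal.ofReal |f y| ^ q ∂μ ≤ ε ^ q * m := by
      calc ∫⁻ y in A k, ENNReal.ofReal |f y| ^ q ∂μ = ∫⁻ y in A k, g y ^ q ∂μ := by
            apply setLIntegral_congr_fun (hAm k)
            intro y hy
            simp only [hg, indicator_of_mem hy.2]
        _ ≤ ∫⁻ y in ball ρ x₁ (Λ * R), g y ^ q ∂μ :=
            lintegral_mono_set fun y hy => hy.1.1
        _ ≤ _ := avgq hL hq hqp hφpos hgm x₁ (Λ * R) (by positivity)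
        _ ≤ _ := by gcongr
    have i2 : ENNReal.ofReal |f x| ^ q * μ (A k) ≤
        2 ^ q * (∫⁻ y in A k, ENNReal.ofReal |f x - f y| ^ q ∂μ + ε ^ q * m) := by
      calc ENNReal.ofReal |f x| ^ q * μ (A k) = ∫⁻ _ in A k, ENNReal.ofReal |f x| ^ q ∂μ := by
            rw [setLIntegral_const]
        _ ≤ ∫⁻ y in A k, 2 ^ q * (ENNReal.ofReal |f x - f y| ^ q + ENNReal.ofReal |f y| ^ q) ∂μ := by
            apply lintegral_mono
            intro y
            refine le_trans (ENNReal.rpow_le_rpow ?_ hq.le) (add_rpow_le' _ _ hq)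
            rw [← ENNReal.ofReal_add (abs_nonneg _) (abs_nonneg _)]
            apply ENNReal.ofReal_le_ofReal
            have := abs_add_le (f x - f y) (f y)
            simpa using this
        _ = 2 ^ q * (∫⁻ y in A k, ENNReal.ofReal |f x - f y| ^ q ∂μ +
              ∫⁻ y in A k, ENNReal.ofReal |f y| ^ q ∂μ) := by
            rw [lintegral_const_mul' _ _ h2q, lintegral_add_left hdm]
        _ ≤ _ := by gcongr
    -- kernel
    have hwpos : 0 < 2 * K₀ * Λ ^ (N + 1) * Λ ^ k := by positivity
    have hw0 : w k ≠ 0 := (ENNReal.rpow_pos (by simpa using hwpos) ENNReal.ofReal_ne_top).ne'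
    have hwt : w k ≠ ⊤ :=
      ENNReal.rpow_ne_top_of_ne_zero (by simpa using hwpos) ENNReal.ofReal_ne_top
    have i3 : w k * ∫⁻ y in A k, ENNReal.ofReal |f x - f y| ^ q ∂μ ≤
        D * m * ∫⁻ y in A k, F y ∂μ := by
      have hDm : D * m ≠ ⊤ := ENNReal.mul_ne_top hDt hB.2.2.ne
      have hDm0 : D * m ≠ 0 := mul_ne_zero (by positivity) hB.1.ne'
      rw [← lintegral_const_mul' _ _ hwt, ← lintegral_const_mul' _ _ hDm]
      apply setLIntegral_mono' (hAm k)
      intro y hy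
      have hyB : ρ x₁ y < Λ * R := hy.1.1
      have hxy : ρ x y ≤ 2 * K₀ * (Λ * R) := by
        have := hX.triangle x x₁ y
        have : K₀ * (ρ x x₁ + ρ x₁ y) ≤ K₀ * (Λ * R + Λ * R) := by gcongr; linarith
        linarith
      have hU : U ρ μ x y ≤ D * m := by
        refine (min_le_left _ _).trans ((measure_mono (ball_mono hxy)).trans ?_)
        apply hD x x₁ (Λ * R) (by positivity)
        have : Λ * R ≤ 2 * K₀ * (Λ * R) :=
          le_mul_of_one_le_left (by positivity) (by linarith)
        linarith
      have hρ : ENNReal.ofReal (ρ x y) ^ (s * q) ≤ (w k)⁻¹ := by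
        rw [hw]; simp only
        rw [ENNReal.rpow_neg, inv_inv]
        apply ENNReal.rpow_le_rpow _ (by positivity)
        apply ENNReal.ofReal_le_ofReal
        refine hxy.trans (le_of_eq ?_)
        rw [hR]; ring
      have hden : U ρ μ x y * ENNReal.ofReal (ρ x y) ^ (s * q) ≤ D * m * (w k)⁻¹ :=
        mul_le_mul' hU hρ
      calc w k * ENNReal.ofReal |f x - f y| ^ q
          = D * m * (ENNReal.ofReal |f x - f y| ^ q / (D * m * (w k)⁻¹)) := by
            rw [div_eq_mul_inv, ENNReal.mul_inv (Or.inl hDm0) (Or.inl hDm), inv_inv,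
              show D * m * (ENNReal.ofReal |f x - f y| ^ q * ((D * m)⁻¹ * w k)) =
                (D * m * (D * m)⁻¹) * (w k * ENNReal.ofReal |f x - f y| ^ q) by ring,
              ENNReal.mul_inv_cancel hDm0 hDm, one_mul]
        _ ≤ D * m * F y := by
            rw [hF]; simp only
            gcongr
    have i4 : ENNReal.ofReal |f x| ^ q * w k * m ≤
        (C₄ * D * ∫⁻ y in A k, F y ∂μ + C₄ * ε ^ q * w k) * m := by
      calc ENNReal.ofReal |f x| ^ q * w k * m ≤ ENNReal.ofReal |f x| ^ q * w k * (c * μ (A k)) := by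
            gcongr; exact hann R p2
        _ = w k * c * (ENNReal.ofReal |f x| ^ q * μ (A k)) := by ring
        _ ≤ w k * c * (2 ^ q * (∫⁻ y in A k, ENNReal.ofReal |f x - f y| ^ q ∂μ + ε ^ q * m)) := by
            gcongr
        _ = C₄ * (w k * ∫⁻ y in A k, ENNReal.ofReal |f x - f y| ^ q ∂μ) +
              C₄ * ε ^ q * w k * m := by rw [hC₄]; ring
        _ ≤ C₄ * (D * m * ∫⁻ y in A k, F y ∂μ) + C₄ * ε ^ q * w k * m := by gcongr
        _ = _ := by ring
    exact (ENNReal.mul_le_mul_iff_left hB.1.ne' hB.2.2.ne).1 i4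
  have hsum := ENNReal.tsum_le_tsum hwk
  rw [ENNReal.tsum_mul_left, ENNReal.tsum_add, ENNReal.tsum_mul_left, ENNReal.tsum_mul_left] at hsum
  set W := ∑' k, w k with hW
  have hW0 : W ≠ 0 := by
    intro h0
    rw [h0, ENNReal.inv_zero] at hs1
    exact (ENNReal.mul_ne_top ENNReal.ofReal_ne_top ENNReal.ofReal_ne_top) (top_le_iff.1 hs1)
  have hfin : ENNReal.ofReal |f x| ^ q ≤
      C₃ * (ENNReal.ofReal s * sob ρ μ Ω f q s x ^ q) + C₄ * ε ^ q := by
    calc ENNReal.ofReal |f x| ^ q = ENNReal.ofReal |f x| ^ q * W * W⁻¹ := by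
          rw [mul_assoc, ENNReal.mul_inv_cancel hW0 hs2, mul_one]
      _ ≤ (C₄ * D * sob ρ μ Ω f q s x ^ q + C₄ * ε ^ q * W) * W⁻¹ := by
          gcongr; exact hsum.trans (by gcongr)
      _ = C₄ * D * sob ρ μ Ω f q s x ^ q * W⁻¹ + C₄ * ε ^ q * (W * W⁻¹) := by ring
      _ ≤ C₄ * D * sob ρ μ Ω f q s x ^ q * (C₂ * ENNReal.ofReal s) + C₄ * ε ^ q * (W * W⁻¹) := by
          gcongr
      _ = _ := by rw [ENNReal.mul_inv_cancel hW0 hs2, hC₃, hC₄]; ring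
  have hcan : ∀ a : ℝ≥0∞, (a ^ q) ^ (1 / q) = a := fun a => by
    rw [← ENNReal.rpow_mul, mul_one_div_cancel hq.ne', ENNReal.rpow_one]
  calc ENNReal.ofReal |f x| = (ENNReal.ofReal |f x| ^ q) ^ (1 / q) := (hcan _).symm
    _ ≤ (C₃ * (ENNReal.ofReal s * sob ρ μ Ω f q s x ^ q) + C₄ * ε ^ q) ^ (1 / q) :=
        ENNReal.rpow_le_rpow hfin hq1.le
    _ ≤ 2 ^ (1 / q) * ((C₃ * (ENNReal.ofReal s * sob ρ μ Ω f q s x ^ q)) ^ (1 / q) +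
          (C₄ * ε ^ q) ^ (1 / q)) := add_rpow_le' _ _ hq1
    _ = 2 ^ (1 / q) * (C₃ ^ (1 / q) * (ENNReal.ofReal s ^ (1 / q) * sob ρ μ Ω f q s x) +
          C₄ ^ (1 / q) * ε) := by
        rw [ENNReal.mul_rpow_of_nonneg C₃ _ hq1.le, ENNReal.mul_rpow_of_nonneg C₄ _ hq1.le,
          ENNReal.mul_rpow_of_nonneg (ENNReal.ofReal s) _ hq1.le, hcan, hcan]
    _ ≤ 2 ^ (1 / q) * ((C₃ ^ (1 / q) + C₄ ^ (1 / q)) *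
          (ENNReal.ofReal s ^ (1 / q) * sob ρ μ Ω f q s x) +
          (C₃ ^ (1 / q) + C₄ ^ (1 / q)) * ε) := by
        gcongr
        · exact le_self_add
        · exact le_add_self
    _ = _ := by ring

lemma lower_main [Nonempty X] {ρ : X → X → ℝ} {μ : Measure X} {K₀ : ℝ} {L : ℝ≥0∞}
    (hX : IsQuasiMetricMeasure ρ μ K₀) (hL : IsDoubling ρ μ L) (hWRD : WRD ρ μ)
    {Ω : Set X} (hΩm : MeasurableSet Ω) (hWMD : WMD ρ μ Ω)
    {p q : ℝ} (hq : 0 < q) (hqp : q < p)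
    {φ : X → ℝ → ℝ} (hφpos : PhiPos φ) (hφG : GdecP ρ μ p φ)
    {Cφ : ℝ} (hφI : PhiIntCond φ Cφ) :
    ∃ C : ℝ≥0∞, C ≠ ⊤ ∧ C ≠ 0 ∧ ∀ f : X → ℝ, Measurable f →
      morreyNorm ρ μ p φ (Ω.indicator fun x => ENNReal.ofReal |f x|) ≠ ⊤ →
      morreyNorm ρ μ p φ (Ω.indicator fun x => ENNReal.ofReal |f x|) ≤
        C * liminf (fun s : ℝ => ENNReal.ofReal s ^ (1 / q) *
          morreyNorm ρ μ p φ (Ω.indicator (sob ρ μ Ω f q s))) (𝓝[>] (0:ℝ)) := by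
  have hp : 0 < p := hq.trans hqp
  obtain ⟨C, hC, hpt⟩ := lower_pt hX hL hWRD hΩm hWMD hq hqp hφpos hφG hφI
  set C' := (C + 1) * 2 * 2 ^ (1 / p) with hC'
  have hC't : C' ≠ ⊤ := ENNReal.mul_ne_top (ENNReal.mul_ne_top (by simp [hC]) (by simp))
    (ENNReal.rpow_ne_top_of_nonneg (by positivity) (by simp))
  have hC'0 : C' ≠ 0 := by
    refine mul_ne_zero (mul_ne_zero (by simp) (by simp)) ?_
    exact (ENNReal.rpow_pos (by simp) (by simp)).ne'
  refine ⟨C', hC't, hC'0, fun f hf hN => ?_⟩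
  set ℓ := liminf (fun s : ℝ => ENNReal.ofReal s ^ (1 / q) *
          morreyNorm ρ μ p φ (Ω.indicator (sob ρ μ Ω f q s))) (𝓝[>] (0:ℝ)) with hℓ
  rw [morrey_le_iff hL hp hφpos]
  intro z r hr
  have hb := hL.2.2 z r hr
  set m := μ (ball ρ z r) with hm
  set Φ := ENNReal.ofReal (φ z r) with hΦ
  have hΦ0 : Φ ≠ 0 := by simpa [hΦ] using hφpos z r hr
  have hΦt : Φ ≠ ⊤ := ENNReal.ofReal_ne_top
  set g := Ω.indicator fun x => ENNReal.ofReal |f x| with hg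
  set I := ∫⁻ y in ball ρ z r, g y ^ p ∂μ with hI
  have main : ∀ ε : ℝ≥0∞, ε ≠ 0 → ∀ᶠ s in 𝓝[>] (0 : ℝ), I ≤ (C' * (ENNReal.ofReal s ^ (1 / q) *
          morreyNorm ρ μ p φ (Ω.indicator (sob ρ μ Ω f q s)) * Φ + ε)) ^ p * m := by
    intro ε hε
    filter_upwards [hpt f hf hN z r ε hε] with s hs
    refine comb (ν := μ.restrict (ball ρ z r)) hp
      (u := fun x => ENNReal.ofReal s ^ (1 / q) * Ω.indicator (sob ρ μ Ω f q s) x)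
      (v := fun _ => ε) (c := C + 1) (by simp [hC]) measurable_const ?_ ?_ ?_
    · filter_upwards [ae_restrict_mem (hX.measurableSet_ball z r)] with x hx
      by_cases hxΩ : x ∈ Ω
      · simp only [hg, indicator_of_mem hxΩ]
        refine (hs x hx).trans ?_
        gcongr
        exact le_self_add
      · simp [hg, indicator_of_notMem hxΩ]
    · have hst : (ENNReal.ofReal s ^ (1 / q)) ^ p ≠ ⊤ := ENNReal.rpow_ne_top_of_nonneg hp.le
        (ENNReal.rpow_ne_top_of_nonneg (by positivity) ENNReal.ofReal_ne_top)
      simp only [ENNReal.mul_rpow_of_nonneg _ _ hp.le]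
      rw [lintegral_const_mul' _ _ hst, mul_assoc, mul_assoc]
      gcongr
      have := (morrey_le_iff hL hp hφpos).1
        (le_refl (morreyNorm ρ μ p φ (Ω.indicator (sob ρ μ Ω f q s)))) z r hr
      rwa [ENNReal.mul_rpow_of_nonneg _ _ hp.le, mul_assoc] at this
    · rw [lintegral_const, Measure.restrict_apply_univ]
  have key : (I / m) ^ (1 / p) / C' ≤ ℓ * Φ := by
    refine ENNReal.le_of_forall_pos_le_add fun ε hε _ => ?_
    have hε' : (ε : ℝ≥0∞) ≠ 0 := by simpa using hε.ne'
    rw [← tsub_le_iff_right, ← ENNReal.div_le_iff hΦ0 hΦt]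
    refine le_liminf_of_le (by isBoundedDefault) ?_
    filter_upwards [main ε hε'] with s hs
    rw [ENNReal.div_le_iff hΦ0 hΦt, tsub_le_iff_right, ENNReal.div_le_iff hC'0 hC't, one_div,
      ENNReal.rpow_inv_le_iff hp, ENNReal.div_le_iff hb.1.ne' hb.2.2.ne, mul_comm _ C']
    exact hs
  rw [ENNReal.div_le_iff hC'0 hC't, one_div,
      ENNReal.rpow_inv_le_iff hp, ENNReal.div_le_iff hb.1.ne' hb.2.2.ne] at key
  rwa [show C' * ℓ * Φ = ℓ * Φ * C' by ring]

lemma series_upper {q s : ℝ} (hq : 0 < q) (hs : 0 < s) (hs1 : s ≤ 1) :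
    ENNReal.ofReal s * (∑' k : ℕ, ENNReal.ofReal (2 ^ k) ^ (-(s * q))) ≤
      ENNReal.ofReal ((1 + q * Real.log 2) / (q * Real.log 2)) := by
  have hlog : 0 < Real.log 2 := Real.log_pos (by norm_num)
  have hsq : 0 < s * q := by positivity
  set y : ℝ := 2 ^ (-(s * q)) with hy
  have hy0 : 0 < y := Real.rpow_pos_of_pos (by norm_num) _
  have hy1 : y < 1 := Real.rpow_lt_one_of_one_lt_of_neg (by norm_num) (by linarith)
  have hyle : y * (1 + s * q * Real.log 2) ≤ 1 := by
    have := Real.add_one_le_exp (Real.log 2 * (s * q))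
    rw [← Real.rpow_def_of_pos (by norm_num)] at this
    rw [hy, Real.rpow_neg (by norm_num)]
    rw [inv_mul_le_iff₀ (Real.rpow_pos_of_pos (by norm_num) _)]
    linarith
  have hsum : (∑' k : ℕ, ENNReal.ofReal (2 ^ k) ^ (-(s * q))) = ENNReal.ofReal (1 - y)⁻¹ := by
    rw [ENNReal.ofReal_inv_of_pos (by linarith), ENNReal.ofReal_sub _ hy0.le, ENNReal.ofReal_one,
      ← ENNReal.tsum_geometric]
    congr 1; ext k
    rw [ENNReal.ofReal_rpow_of_pos (by positivity), ← ENNReal.ofReal_pow hy0.le,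
      hy, ← Real.rpow_natCast, ← Real.rpow_natCast,
      ← Real.rpow_mul (by norm_num), ← Real.rpow_mul (by norm_num), mul_comm (k : ℝ)]
  rw [hsum, ← ENNReal.ofReal_mul hs.le]
  apply ENNReal.ofReal_le_ofReal
  rw [← div_eq_mul_inv, div_le_div_iff₀ (by linarith) (by positivity)]
  -- s * (q log 2) ≤ (1 + q log 2) * (1 - y)
  have h1 : s * (q * Real.log 2) ≤ (1 + s * q * Real.log 2) * (1 - y) := by nlinarith
  refine h1.trans ?_
  apply mul_le_mul_of_nonneg_right _ (by linarith)
  have : s * (q * Real.log 2) ≤ 1 * (q * Real.log 2) := by gcongr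
  linarith

lemma kernel_exists [Nonempty X] {ρ : X → X → ℝ} {μ : Measure X} {K₀ : ℝ} {L : ℝ≥0∞}
    (hX : IsQuasiMetricMeasure ρ μ K₀) (hL : IsDoubling ρ μ L) :
    ∃ (D : ℝ≥0∞) (c : ℝ) (P : ℕ → X × X → ℝ≥0∞), D ≠ ⊤ ∧ 0 < c ∧ (∀ k, Measurable (P k)) ∧
      (∀ k x y, 2 ^ k ≤ ρ x y → ρ x y < 2 ^ (k + 1) → (U ρ μ x y)⁻¹ ≤ D * P k (x, y)) ∧
      (∀ k x, ∫⁻ y, P k (x, y) ∂μ ≤ 1) ∧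
      (∀ k y, ∫⁻ x, P k (x, y) ∂μ ≤ D) ∧
      (∀ k x y, P k (x, y) ≤
        (ball ρ x (c * 2 ^ k)).indicator (fun _ => D / μ (ball ρ x (c * 2 ^ k))) y) := by
  have hK := hX.one_le
  have hσ := sfin hX hL
  choose E hEm hE1 hE2 using fun k : ℕ => exists_E hX hL (2 ^ (k + 1)) (by positivity)
  set c := 12 * K₀ ^ 3 with hc
  have hc0 : 0 < c := by positivity
  have hc2 : 2 ≤ c := by
    have : 1 ≤ K₀ ^ 3 := one_le_pow₀ hK
    linarith
  obtain ⟨D, hD1, hDt, hD⟩ := dbl2 hX hL c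
  set M : ℕ → X → ℝ≥0∞ := fun k x => μ (Prod.mk x ⁻¹' E k) with hM
  have hMm : ∀ k, Measurable (M k) := fun k => measurable_measure_prodMk_left (hEm k)
  have hE3 : ∀ k x y, (x, y) ∈ E k → ρ x y < c * 2 ^ k := by
    intro k x y h
    have := hE2 k x y h
    rw [hc]; rw [pow_succ (2 : ℝ) k] at this; linarith
  have hMlow : ∀ k x, μ (ball ρ x (2 ^ k)) ≤ M k x := fun k x =>
    measure_mono fun y hy => hE1 k x y (lt_trans hy (by
      apply pow_lt_pow_right₀ (by norm_num) (by omega)))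
  have hMup : ∀ k x, M k x ≤ μ (ball ρ x (c * 2 ^ k)) := fun k x =>
    measure_mono fun y hy => hE3 k x y hy
  have hinv : ∀ k x y, (ρ y x ≤ c * 2 ^ k) → (M k x)⁻¹ ≤ D / μ (ball ρ y (c * 2 ^ k)) := by
    intro k x y h
    have h1 := (hD y x (2 ^ k) (by positivity) h).trans (mul_le_mul' le_rfl (hMlow k x))
    have hb := hL.2.2 y (c * 2 ^ k) (by positivity)
    have hx := hL.2.2 x (2 ^ k) (by positivity)
    have hM0 : M k x ≠ 0 := (lt_of_lt_of_le hx.1 (hMlow k x)).ne'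
    have hMt : M k x ≠ ⊤ :=
      (lt_of_le_of_lt (hMup k x) (hL.2.2 x (c * 2 ^ k) (by positivity)).2.2).ne
    rw [ENNReal.le_div_iff_mul_le (Or.inl hb.1.ne') (Or.inl hb.2.2.ne), mul_comm,
      ← div_eq_mul_inv, ENNReal.div_le_iff hM0 hMt]
    exact h1
  refine ⟨D, c, fun k z => (E k).indicator (fun z => (M k z.1)⁻¹) z, hDt, hc0, ?_, ?_, ?_, ?_, ?_⟩
  · intro k
    exact ((hMm k).comp measurable_fst).inv.indicator (hEm k)
  · intro k x y h1 h2
    simp only [indicator_of_mem (hE1 k x y h2)]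
    have hle : M k x ≤ D * U ρ μ x y := by
      have hxx : ρ x x ≤ c * 2 ^ k := by rw [(hX.eq_zero_iff x x).2 rfl]; positivity
      have hxy : ρ x y ≤ c * 2 ^ k := by
        rw [pow_succ] at h2
        have : (2 : ℝ) * 2 ^ k ≤ c * 2 ^ k := by gcongr
        linarith
      rw [U]
      rcases min_choice (μ (ball ρ x (ρ x y))) (μ (ball ρ y (ρ x y))) with h | h
      · rw [h]
        refine (hMup k x).trans ((hD x x _ (by positivity) hxx).trans ?_)
        gcongr; exact ball_mono h1
      · rw [h]
        refine (hMup k x).trans ((hD x y _ (by positivity) hxy).trans ?_)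
        gcongr; exact ball_mono h1
    have hx := hL.2.2 x (2 ^ k) (by positivity)
    have hM0 : M k x ≠ 0 := (lt_of_lt_of_le hx.1 (hMlow k x)).ne'
    have hMt : M k x ≠ ⊤ :=
      (lt_of_le_of_lt (hMup k x) (hL.2.2 x (c * 2 ^ k) (by positivity)).2.2).ne
    rw [← div_eq_mul_inv, ENNReal.le_div_iff_mul_le (Or.inl hM0) (Or.inl hMt), mul_comm,
      ← div_eq_mul_inv]
    exact ENNReal.div_le_of_le_mul hle
  · intro k x
    have : ∀ y, (E k).indicator (fun z => (M k z.1)⁻¹) (x, y) =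
        (Prod.mk x ⁻¹' E k).indicator (fun _ => (M k x)⁻¹) y := fun y => rfl
    simp only [this]
    rw [lintegral_indicator (measurable_prodMk_left (hEm k)), setLIntegral_const, mul_comm,
      ← div_eq_mul_inv]
    exact ENNReal.div_self_le_one
  · intro k y
    have hb := hL.2.2 y (c * 2 ^ k) (by positivity)
    calc ∫⁻ x, (E k).indicator (fun z => (M k z.1)⁻¹) (x, y) ∂μ
        ≤ ∫⁻ x, (ball ρ y (c * 2 ^ k)).indicator (fun _ => D / μ (ball ρ y (c * 2 ^ k))) x ∂μ := by
          apply lintegral_mono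
          intro x
          by_cases h : (x, y) ∈ E k
          · have h3 : ρ y x < c * 2 ^ k := by rw [hX.symm]; exact hE3 k x y h
            simp only [indicator_of_mem h]
            rw [indicator_of_mem (show x ∈ ball ρ y (c * 2 ^ k) from h3)]
            exact hinv k x y h3.le
          · simp [indicator_of_notMem h]
      _ ≤ D := by
          rw [lintegral_indicator (hX.measurableSet_ball _ _), setLIntegral_const,
            ENNReal.div_mul_cancel hb.1.ne' hb.2.2.ne]
  · intro k x y
    by_cases h : (x, y) ∈ E k
    · have h3 : ρ x y < c * 2 ^ k := hE3 k x y h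
      simp only [indicator_of_mem h]
      rw [indicator_of_mem (show y ∈ ball ρ x (c * 2 ^ k) from h3)]
      exact hinv k x x (by rw [(hX.eq_zero_iff x x).2 rfl]; positivity)
    · simp [indicator_of_notMem h]

lemma four {q : ℝ} (hq : 0 < q) {h a b c d Q : ℝ≥0∞}
    (hh : h ^ q ≤ a ^ q + Q * (b ^ q + (c ^ q + d ^ q))) :
    h ≤ (1 + Q * 3) ^ (1 / q) * (a + (b + (c + d))) := by
  set σ := a + (b + (c + d)) with hσ
  have ha : a ≤ σ := le_self_add
  have hb : b ≤ σ := le_trans (le_self_add) le_add_self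
  have hc : c ≤ σ := le_trans (le_trans le_self_add le_add_self) le_add_self
  have hd : d ≤ σ := le_trans (le_trans le_add_self le_add_self) le_add_self
  have h1 : h ^ q ≤ (1 + Q * 3) * σ ^ q := by
    calc h ^ q ≤ a ^ q + Q * (b ^ q + (c ^ q + d ^ q)) := hh
      _ ≤ σ ^ q + Q * (σ ^ q + (σ ^ q + σ ^ q)) := by gcongr
      _ = _ := by ring
  have hcan : ∀ a : ℝ≥0∞, (a ^ q) ^ (1 / q) = a := fun a => by
    rw [← ENNReal.rpow_mul, mul_one_div_cancel hq.ne', ENNReal.rpow_one]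
  have hq1 : 0 ≤ 1 / q := by positivity
  calc h = (h ^ q) ^ (1 / q) := (hcan h).symm
    _ ≤ ((1 + Q * 3) * σ ^ q) ^ (1 / q) := ENNReal.rpow_le_rpow h1 hq1
    _ = _ := by rw [ENNReal.mul_rpow_of_nonneg _ _ hq1, hcan]

lemma upper_norm [Nonempty X] {ρ : X → X → ℝ} {μ : Measure X} {K₀ : ℝ} {L : ℝ≥0∞}
    (hX : IsQuasiMetricMeasure ρ μ K₀) (hL : IsDoubling ρ μ L)
    {Ω : Set X} (hΩm : MeasurableSet Ω)
    {p q : ℝ} (hq : 0 < q) (hqp : q < p)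
    {φ : X → ℝ → ℝ} (hφpos : PhiPos φ) (hφG : GdecP ρ μ p φ) (hφN : Nearness ρ φ) :
    ∃ C : ℝ≥0∞, C ≠ ⊤ ∧ ∀ f : X → ℝ, Measurable f → ∀ s₀ s : ℝ, 0 < s → s ≤ s₀ →
      morreyNorm ρ μ p φ (Ω.indicator (sob ρ μ Ω f q s)) ≤
        C * (morreyNorm ρ μ p φ (Ω.indicator (sob ρ μ Ω f q s₀)) +
          (∑' k : ℕ, ENNReal.ofReal (2 ^ k) ^ (-(s * q))) ^ (1 / q) *
          morreyNorm ρ μ p φ (Ω.indicator fun x => ENNReal.ofReal |f x|)) := by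
  have hp : 0 < p := hq.trans hqp
  have hK := hX.one_le
  have hσ := sfin hX hL
  obtain ⟨D, c, P, hDt, hc0, hPm, hP1, hP2, hP3, hP4⟩ := kernel_exists hX hL
  obtain ⟨D₂, -, hD₂t, hD₂⟩ := dbl2 hX hL (2 * K₀)
  obtain ⟨CG, hCG1, hCG⟩ := hφG
  obtain ⟨CN, hCN1, hCN⟩ := hφN
  have hq1 : 0 < 1 / q := by positivity
  have hp1 : 0 < 1 / p := by positivity
  have h2q : (2 : ℝ≥0∞) ^ q ≠ ⊤ := ENNReal.rpow_ne_top_of_nonneg hq.le (by simp)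
  set Q := D * (2 : ℝ≥0∞) ^ q with hQ
  have hQt : Q ≠ ⊤ := ENNReal.mul_ne_top hDt h2q
  set Cq := (1 + Q * 3) ^ (1 / q) with hCq
  have hCqt : Cq ≠ ⊤ := ENNReal.rpow_ne_top_of_nonneg hq1.le
    (ENNReal.add_ne_top.2 ⟨by simp, ENNReal.mul_ne_top hQt (by simp)⟩)
  set κ := (2 : ℝ≥0∞) * 2 ^ (1 / p) with hκ
  have hκt : κ ≠ ⊤ := ENNReal.mul_ne_top (by simp)
    (ENNReal.rpow_ne_top_of_nonneg hp1.le (by simp))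
  set G := ENNReal.ofReal CG with hG
  set B₂ := (D * D₂) ^ (1 / p) * G with hB₂
  set B₃ := D ^ (1 / q) * ENNReal.ofReal (CG * CN) with hB₃
  have hB₂t : B₂ ≠ ⊤ := ENNReal.mul_ne_top (ENNReal.rpow_ne_top_of_nonneg hp1.le
    (ENNReal.mul_ne_top hDt hD₂t)) ENNReal.ofReal_ne_top
  have hB₃t : B₃ ≠ ⊤ := ENNReal.mul_ne_top (ENNReal.rpow_ne_top_of_nonneg hq1.le hDt)
    ENNReal.ofReal_ne_top
  set H := κ * (1 + κ * (B₂ + B₃)) with hH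
  have hHt : H ≠ ⊤ := ENNReal.mul_ne_top hκt (ENNReal.add_ne_top.2 ⟨by simp,
    ENNReal.mul_ne_top hκt (ENNReal.add_ne_top.2 ⟨hB₂t, hB₃t⟩)⟩)
  refine ⟨Cq * κ * (1 + H), ENNReal.mul_ne_top (ENNReal.mul_ne_top hCqt hκt)
    (ENNReal.add_ne_top.2 ⟨by simp, hHt⟩), ?_⟩
  intro f hf s₀ s hs hss
  set w : ℕ → ℝ≥0∞ := fun k => ENNReal.ofReal (2 ^ k) ^ (-(s * q)) with hw
  set W := ∑' k, w k with hW
  set g := Ω.indicator fun x => ENNReal.ofReal |f x| with hg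
  set N := morreyNorm ρ μ p φ g with hN
  set S₀ := morreyNorm ρ μ p φ (Ω.indicator (sob ρ μ Ω f q s₀)) with hS₀
  have hfm : Measurable fun x => ENNReal.ofReal |f x| :=
    (continuous_abs.measurable.comp hf).ennreal_ofReal
  have hgm : Measurable g := hfm.indicator hΩm
  set K : X × X → ℝ≥0∞ := fun z => ∑' k, w k * P k z with hKdef
  have hKm : Measurable K := Measurable.tsum fun k => (hPm k).const_mul _
  have hKx : ∀ x, Measurable fun y => K (x, y) := fun x => hKm.comp measurable_prodMk_left
  have hKy : ∀ y, Measurable fun x => K (x, y) := fun y => hKm.comp measurable_prodMk_right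
  have hPx : ∀ k x, Measurable fun y => P k (x, y) := fun k x =>
    (hPm k).comp measurable_prodMk_left
  have hPy : ∀ k y, Measurable fun x => P k (x, y) := fun k y =>
    (hPm k).comp measurable_prodMk_right
  have hK1 : ∀ x, ∫⁻ y, K (x, y) ∂μ ≤ W := by
    intro x
    simp only [hKdef]
    rw [lintegral_tsum fun k => ((hPx k x).const_mul _).aemeasurable]
    refine ENNReal.tsum_le_tsum fun k => ?_
    rw [lintegral_const_mul _ (hPx k x)]
    exact (mul_le_mul' le_rfl (hP2 k x)).trans (by rw [mul_one])
  have hK2 : ∀ y, ∫⁻ x, K (x, y) ∂μ ≤ W * D := by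
    intro y
    simp only [hKdef]
    rw [lintegral_tsum fun k => ((hPy k y).const_mul _).aemeasurable, hW,
      ← ENNReal.tsum_mul_right]
    refine ENNReal.tsum_le_tsum fun k => ?_
    rw [lintegral_const_mul _ (hPy k y)]
    exact mul_le_mul' le_rfl (hP3 k y)
  -- pointwise estimate of the kernel
  have hpw : ∀ x y, ENNReal.ofReal |f x - f y| ^ q /
      (U ρ μ x y * ENNReal.ofReal (ρ x y) ^ (s * q)) ≤
      ENNReal.ofReal |f x - f y| ^ q / (U ρ μ x y * ENNReal.ofReal (ρ x y) ^ (s₀ * q)) +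
      D * (K (x, y) * ENNReal.ofReal |f x - f y| ^ q) := by
    intro x y
    by_cases h1 : ρ x y < 1
    · refine le_trans ?_ le_self_add
      refine ENNReal.div_le_div_left (mul_le_mul' le_rfl ?_) _
      apply ENNReal.rpow_le_rpow_of_exponent_ge
      · simpa using h1.le
      · gcongr
    · push Not at h1
      refine le_trans ?_ le_add_self
      obtain ⟨k, hk1, hk2⟩ := exists_nat_pow_near h1 (one_lt_two)
      have hρ0 : ENNReal.ofReal (ρ x y) ^ (s * q) ≠ 0 := by
        refine (ENNReal.rpow_pos ?_ ENNReal.ofReal_ne_top).ne'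
        simpa using lt_of_lt_of_le one_pos h1
      have hρt : ENNReal.ofReal (ρ x y) ^ (s * q) ≠ ⊤ :=
        ENNReal.rpow_ne_top_of_nonneg (by positivity) ENNReal.ofReal_ne_top
      rw [div_eq_mul_inv, ENNReal.mul_inv (Or.inr hρt) (Or.inr hρ0), mul_comm]
      rw [← mul_assoc D]
      refine mul_le_mul' ?_ le_rfl
      calc (U ρ μ x y)⁻¹ * (ENNReal.ofReal (ρ x y) ^ (s * q))⁻¹ ≤ D * P k (x, y) * w k := by
            gcongr
            · exact hP1 k x y hk1 hk2
            · rw [hw]; simp only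
              rw [ENNReal.rpow_neg]
              gcongr
        _ = D * (w k * P k (x, y)) := by ring
        _ ≤ D * K (x, y) := by
            gcongr
            exact ENNReal.le_tsum (f := fun k => w k * P k (x, y)) k
  have hsob : ∀ x, x ∈ Ω → sob ρ μ Ω f q s x ^ q ≤ sob ρ μ Ω f q s₀ x ^ q +
      Q * (W * g x ^ q + ∫⁻ y, K (x, y) * g y ^ q ∂μ) := by
    intro x hx
    have hdm : Measurable fun y => ENNReal.ofReal |f x - f y| ^ q :=
      ((continuous_abs.measurable.comp (measurable_const.sub hf)).ennreal_ofReal).pow_const q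
    rw [sob_rpow _ _ _ _ hq, sob_rpow _ _ _ _ hq]
    refine (lintegral_mono (hpw x)).trans ?_
    have hm2 : Measurable fun y => D * (K (x, y) * ENNReal.ofReal |f x - f y| ^ q) :=
      ((hKx x).mul hdm).const_mul D
    rw [lintegral_add_right _ hm2]
    gcongr
    calc ∫⁻ y in Ω, D * (K (x, y) * ENNReal.ofReal |f x - f y| ^ q) ∂μ
        ≤ ∫⁻ y in Ω, Q * (K (x, y) * g x ^ q + K (x, y) * g y ^ q) ∂μ := by
          apply setLIntegral_mono' hΩm
          intro y hy
          rw [hQ, mul_assoc]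
          refine mul_le_mul' le_rfl ?_
          rw [← mul_add, mul_left_comm]
          refine mul_le_mul' le_rfl ?_
          refine le_trans (ENNReal.rpow_le_rpow ?_ hq.le) (add_rpow_le' _ _ hq)
          simp only [hg, indicator_of_mem hx, indicator_of_mem hy]
          rw [← ENNReal.ofReal_add (abs_nonneg _) (abs_nonneg _)]
          exact ENNReal.ofReal_le_ofReal (abs_sub _ _)
      _ ≤ ∫⁻ y, Q * (K (x, y) * g x ^ q + K (x, y) * g y ^ q) ∂μ :=
          setLIntegral_le_lintegral _ _
      _ = Q * ((∫⁻ y, K (x, y) ∂μ) * g x ^ q + ∫⁻ y, K (x, y) * g y ^ q ∂μ) := by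
          rw [lintegral_const_mul' _ _ hQt, lintegral_add_left ((hKx x).mul_const _),
            lintegral_mul_const _ (hKx x)]
      _ ≤ _ := by gcongr; exact hK1 x
  rw [morrey_le_iff hL hp hφpos]
  intro z r hr
  have hb := hL.2.2 z r hr
  set m := μ (ball ρ z r) with hm
  set Φ := ENNReal.ofReal (φ z r) with hΦ
  set Bz := ball ρ z (2 * K₀ * r) with hBz
  have hBzm : MeasurableSet Bz := hX.measurableSet_ball _ _
  set T : X → ℝ≥0∞ := fun x => ∫⁻ y in Bz, K (x, y) * g y ^ q ∂μ with hT
  have hKg : ∀ a : ℝ, Measurable fun z : X × X => K z * g z.2 ^ a := fun a =>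
    hKm.mul ((hgm.comp measurable_snd).pow_const a)
  have hTm : Measurable T := (hKg q).lintegral_prod_right'
  have hNb : ∀ x R, 0 < R → ∫⁻ y in ball ρ x R, g y ^ p ∂μ ≤
      (N * ENNReal.ofReal (φ x R)) ^ p * μ (ball ρ x R) :=
    fun x R hR => (morrey_le_iff hL hp hφpos).1 le_rfl x R hR
  -- far part
  have hfar : ∀ x ∈ ball ρ z r, ∫⁻ y in Bzᶜ, K (x, y) * g y ^ q ∂μ ≤
      (W ^ (1 / q) * (B₃ * N) * Φ) ^ q := by
    intro x hx
    have hx' : ρ z x < r := hx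
    have hterm : ∀ k, ∫⁻ y in Bzᶜ, P k (x, y) * g y ^ q ∂μ ≤
        D * (N * (ENNReal.ofReal (CG * CN) * Φ)) ^ q := by
      intro k
      have hbx := hL.2.2 x (c * 2 ^ k) (by positivity)
      by_cases hk : c * 2 ^ k ≤ r
      · have : ∫⁻ y in Bzᶜ, P k (x, y) * g y ^ q ∂μ ≤ ∫⁻ y in Bzᶜ, 0 ∂μ := by
          apply setLIntegral_mono' hBzm.compl
          intro y hy
          have hy' : 2 * K₀ * r ≤ ρ z y := not_lt.1 hy
          have hny : y ∉ ball ρ x (c * 2 ^ k) := by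
            intro hy2
            have hy3 : ρ x y < c * 2 ^ k := hy2
            have h1 := hX.triangle z x y
            have h2 : K₀ * (ρ z x + ρ x y) < K₀ * (r + r) := by gcongr; linarith
            linarith
          have := hP4 k x y
          rw [indicator_of_notMem hny] at this
          rw [le_zero_iff.1 this, zero_mul]
        refine this.trans ?_
        simp
      · push Not at hk
        have hφle : ENNReal.ofReal (φ x (c * 2 ^ k)) ≤ ENNReal.ofReal (CG * CN) * Φ := by
          rw [hΦ, ← ENNReal.ofReal_mul (by positivity)]
          apply ENNReal.ofReal_le_ofReal
          have h1 := (hCG x r (c * 2 ^ k) hr hk.le).2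
          have h2 := hCN x z r hr (by rw [hX.symm]; exact hx'.le)
          calc _ ≤ CG * φ x r := h1
            _ ≤ CG * (CN * φ z r) := by gcongr
            _ = _ := by ring
        calc ∫⁻ y in Bzᶜ, P k (x, y) * g y ^ q ∂μ ≤ ∫⁻ y, P k (x, y) * g y ^ q ∂μ :=
              setLIntegral_le_lintegral _ _
          _ ≤ ∫⁻ y, (ball ρ x (c * 2 ^ k)).indicator
                (fun y => D / μ (ball ρ x (c * 2 ^ k)) * g y ^ q) y ∂μ := by
              apply lintegral_mono
              intro y
              simp only
              rw [indicator_mul_left]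
              gcongr
              exact hP4 k x y
          _ = D / μ (ball ρ x (c * 2 ^ k)) * ∫⁻ y in ball ρ x (c * 2 ^ k), g y ^ q ∂μ := by
              rw [lintegral_indicator (hX.measurableSet_ball _ _),
                lintegral_const_mul _ (hgm.pow_const q)]
          _ ≤ D / μ (ball ρ x (c * 2 ^ k)) * ((N * ENNReal.ofReal (φ x (c * 2 ^ k))) ^ q *
                μ (ball ρ x (c * 2 ^ k))) := by
              gcongr
              exact avgq hL hq hqp hφpos hgm x _ (by positivity)
          _ = D * (N * ENNReal.ofReal (φ x (c * 2 ^ k))) ^ q := by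
              rw [mul_left_comm, ENNReal.div_mul_cancel hbx.1.ne' hbx.2.2.ne, mul_comm]
          _ ≤ _ := by gcongr
    calc ∫⁻ y in Bzᶜ, K (x, y) * g y ^ q ∂μ
        = ∑' k, w k * ∫⁻ y in Bzᶜ, P k (x, y) * g y ^ q ∂μ := by
          simp only [hKdef, ← ENNReal.tsum_mul_right]
          have hm1 : ∀ k, Measurable fun y => P k (x, y) * g y ^ q := fun k =>
            ((hPm k).comp measurable_prodMk_left).mul (hgm.pow_const q)
          rw [lintegral_tsum fun k => by
            simp only [mul_assoc]; exact ((hm1 k).const_mul _).aemeasurable]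
          congr 1; ext k
          simp only [mul_assoc]
          rw [lintegral_const_mul _ (hm1 k)]
      _ ≤ ∑' k, w k * (D * (N * (ENNReal.ofReal (CG * CN) * Φ)) ^ q) := by
          gcongr with k; exact hterm k
      _ = W * (D * (N * (ENNReal.ofReal (CG * CN) * Φ)) ^ q) := ENNReal.tsum_mul_right
      _ = (W ^ (1 / q)) ^ q * ((D ^ (1 / q)) ^ q * (N * (ENNReal.ofReal (CG * CN) * Φ)) ^ q) := by
          rw [← ENNReal.rpow_mul, ← ENNReal.rpow_mul, one_div_mul_cancel hq.ne',
            ENNReal.rpow_one, ENNReal.rpow_one]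
      _ = (W ^ (1 / q) * (B₃ * N) * Φ) ^ q := by
          rw [← ENNReal.mul_rpow_of_nonneg _ _ hq.le, ← ENNReal.mul_rpow_of_nonneg _ _ hq.le, hB₃]
          congr 1; ring
  -- near part
  have hnear : ∫⁻ x in ball ρ z r, (T x ^ (1 / q)) ^ p ∂μ ≤
      (W ^ (1 / q) * (B₂ * N) * Φ) ^ p * m := by
    have ht : 1 < p / q := (one_lt_div hq).2 hqp
    have hTt : ∀ x, (T x ^ (1 / q)) ^ p ≤ W ^ (p / q - 1) * ∫⁻ y in Bz, K (x, y) * g y ^ p ∂μ := by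
      intro x
      have hj := jensen (ν := (μ.restrict Bz).withDensity fun y => K (x, y)) ht (hgm.pow_const q)
      rw [lintegral_withDensity_eq_lintegral_mul _ (hKx x) (hgm.pow_const q),
        lintegral_withDensity_eq_lintegral_mul _ (hKx x) ((hgm.pow_const q).pow_const _)] at hj
      simp only [Pi.mul_apply, ← ENNReal.rpow_mul, mul_div_cancel₀ p hq.ne'] at hj
      rw [← ENNReal.rpow_mul, one_div_mul_eq_div]
      refine hj.trans (mul_le_mul' (ENNReal.rpow_le_rpow ?_ (by linarith)) le_rfl)
      rw [withDensity_apply _ MeasurableSet.univ, Measure.restrict_univ]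
      exact (setLIntegral_le_lintegral _ _).trans (hK1 x)
    calc ∫⁻ x in ball ρ z r, (T x ^ (1 / q)) ^ p ∂μ
        ≤ ∫⁻ x, W ^ (p / q - 1) * ∫⁻ y in Bz, K (x, y) * g y ^ p ∂μ ∂μ :=
          (lintegral_mono hTt).trans (setLIntegral_le_lintegral _ _)
      _ = W ^ (p / q - 1) * ∫⁻ x, ∫⁻ y in Bz, K (x, y) * g y ^ p ∂μ ∂μ :=
          lintegral_const_mul _ (hKg p).lintegral_prod_right'
      _ = W ^ (p / q - 1) * ∫⁻ y in Bz, (∫⁻ x, K (x, y) ∂μ) * g y ^ p ∂μ := by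
          rw [lintegral_lintegral_swap (hKg p).aemeasurable]
          congr 2; ext y
          rw [lintegral_mul_const _ (hKy y)]
      _ ≤ W ^ (p / q - 1) * ∫⁻ y in Bz, (W * D) * g y ^ p ∂μ := by
          gcongr with y; exact hK2 y
      _ = W ^ (p / q - 1) * ((W * D) * ∫⁻ y in Bz, g y ^ p ∂μ) := by
          rw [lintegral_const_mul _ (hgm.pow_const p)]
      _ ≤ W ^ (p / q - 1) * ((W * D) * ((N * (G * Φ)) ^ p * (D₂ * m))) := by
          gcongr
          refine (hNb z _ (by positivity)).trans ?_
          gcongr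
          · rw [hG, hΦ, ← ENNReal.ofReal_mul (by positivity)]
            apply ENNReal.ofReal_le_ofReal
            exact (hCG z r (2 * K₀ * r) hr (by nlinarith)).2
          · exact hD₂ z z r hr (by rw [(hX.eq_zero_iff z z).2 rfl]; positivity)
      _ = (W ^ (p / q - 1) * W ^ (1 : ℝ)) * (D * D₂) * (N * (G * Φ)) ^ p * m := by
          rw [ENNReal.rpow_one]; ring
      _ = (W ^ (1 / q)) ^ p * ((D * D₂) ^ (1 / p)) ^ p * (N * (G * Φ)) ^ p * m := by
          rw [← ENNReal.rpow_add_of_nonneg _ _ (by linarith) (by norm_num), sub_add_cancel,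
            ← ENNReal.rpow_mul, ← ENNReal.rpow_mul, one_div_mul_cancel hp.ne', ENNReal.rpow_one,
            one_div_mul_eq_div]
      _ = _ := by
          rw [← ENNReal.mul_rpow_of_nonneg _ _ hp.le, ← ENNReal.mul_rpow_of_nonneg _ _ hp.le, hB₂]
          congr 2; ring
  -- combine
  have hcan : ∀ a : ℝ≥0∞, (a ^ (1 / q)) ^ q = a := fun a => by
    rw [← ENNReal.rpow_mul, one_div_mul_cancel hq.ne', ENNReal.rpow_one]
  set e := W ^ (1 / q) * (B₃ * N) * Φ with he
  have hpt : ∀ x ∈ ball ρ z r, Ω.indicator (sob ρ μ Ω f q s) x ≤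
      Cq * (Ω.indicator (sob ρ μ Ω f q s₀) x +
        (W ^ (1 / q) * g x + (T x ^ (1 / q) + e))) := by
    intro x hx
    by_cases hxΩ : x ∈ Ω
    · rw [indicator_of_mem hxΩ, indicator_of_mem hxΩ]
      apply four hq
      refine (hsob x hxΩ).trans ?_
      rw [ENNReal.mul_rpow_of_nonneg _ _ hq.le, hcan, hcan,
        ← lintegral_add_compl (fun y => K (x, y) * g y ^ q) hBzm]
      gcongr
      exact hfar x hx
    · rw [indicator_of_notMem hxΩ]; exact zero_le
  have c1 := comb (ν := μ.restrict (ball ρ z r)) hp (c := 1) (h := fun x => T x ^ (1 / q) + e)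
    (u := fun x => T x ^ (1 / q)) (v := fun _ => e) (by simp) measurable_const
    (Eventually.of_forall fun x => by simp) hnear
    (le_of_eq (by rw [lintegral_const, Measure.restrict_apply_univ]))
  have c2 := comb (ν := μ.restrict (ball ρ z r)) hp (c := 1)
    (h := fun x => W ^ (1 / q) * g x + (T x ^ (1 / q) + e))
    (u := fun x => W ^ (1 / q) * g x) (v := fun x => T x ^ (1 / q) + e)
    (A := W ^ (1 / q) * N * Φ) (by simp)
    ((hTm.pow_const _).add_const _)
    (Eventually.of_forall fun x => by simp) (by
      simp only [ENNReal.mul_rpow_of_nonneg _ _ hp.le]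
      rw [lintegral_const_mul _ (hgm.pow_const p), mul_assoc, mul_assoc]
      gcongr
      have := hNb z r hr
      rwa [ENNReal.mul_rpow_of_nonneg _ _ hp.le, mul_assoc] at this) c1
  have c3 := comb (ν := μ.restrict (ball ρ z r)) hp (c := Cq)
    (h := Ω.indicator (sob ρ μ Ω f q s))
    (u := Ω.indicator (sob ρ μ Ω f q s₀))
    (v := fun x => W ^ (1 / q) * g x + (T x ^ (1 / q) + e))
    (A := S₀ * Φ) hCqt
    ((hgm.const_mul _).add ((hTm.pow_const _).add_const _))
    (by filter_upwards [ae_restrict_mem (hX.measurableSet_ball z r)] with x hx; exact hpt x hx)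
    ((morrey_le_iff hL hp hφpos).1 le_rfl z r hr) c2
  refine c3.trans (mul_le_mul' (ENNReal.rpow_le_rpow ?_ hp.le) le_rfl)
  rw [he]
  calc _ = Cq * κ * (S₀ + H * (W ^ (1 / q) * N)) * Φ := by
        rw [hH, hκ]; ring
    _ ≤ Cq * κ * ((1 + H) * S₀ + (1 + H) * (W ^ (1 / q) * N)) * Φ := by
        gcongr
        · exact le_mul_of_one_le_left' le_self_add
        · exact le_add_self
    _ = _ := by ring


lemma upper_main [Nonempty X] {ρ : X → X → ℝ} {μ : Measure X} {K₀ : ℝ} {L : ℝ≥0∞}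
    (hX : IsQuasiMetricMeasure ρ μ K₀) (hL : IsDoubling ρ μ L)
    {Ω : Set X} (hΩm : MeasurableSet Ω)
    {p q : ℝ} (hq : 0 < q) (hqp : q < p)
    {φ : X → ℝ → ℝ} (hφpos : PhiPos φ) (hφG : GdecP ρ μ p φ) (hφN : Nearness ρ φ) :
    ∃ C : ℝ≥0∞, C ≠ ⊤ ∧ C ≠ 0 ∧ ∀ f : X → ℝ, Measurable f → ∀ s₀ ∈ Set.Ioo (0 : ℝ) 1,
      morreyNorm ρ μ p φ (Ω.indicator (sob ρ μ Ω f q s₀)) < ∞ →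
      limsup (fun s : ℝ => ENNReal.ofReal s ^ (1 / q) *
        morreyNorm ρ μ p φ (Ω.indicator (sob ρ μ Ω f q s))) (𝓝[>] (0:ℝ)) ≤
        C * morreyNorm ρ μ p φ (Ω.indicator fun x => ENNReal.ofReal |f x|) := by
  obtain ⟨C, hCt, hC⟩ := upper_norm hX hL hΩm hq hqp hφpos hφG hφN
  have hq1 : 0 < 1 / q := by positivity
  set V := ENNReal.ofReal ((1 + q * Real.log 2) / (q * Real.log 2)) ^ (1 / q) with hV
  have hVt : V ≠ ⊤ := ENNReal.rpow_ne_top_of_nonneg hq1.le ENNReal.ofReal_ne_top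
  refine ⟨C * V + 1, ENNReal.add_ne_top.2 ⟨ENNReal.mul_ne_top hCt hVt, by simp⟩, by simp, ?_⟩
  intro f hf s₀ hs₀ hS₀
  set S₀ := morreyNorm ρ μ p φ (Ω.indicator (sob ρ μ Ω f q s₀)) with hS₀d
  set N := morreyNorm ρ μ p φ (Ω.indicator fun x => ENNReal.ofReal |f x|) with hN
  have hev : ∀ᶠ s in 𝓝[>] (0:ℝ), ENNReal.ofReal s ^ (1 / q) *
        morreyNorm ρ μ p φ (Ω.indicator (sob ρ μ Ω f q s)) ≤
        C * S₀ * ENNReal.ofReal s ^ (1 / q) + C * V * N := by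
    filter_upwards [Ioo_mem_nhdsGT hs₀.1] with s hs
    have h1 := hC f hf s₀ s hs.1 hs.2.le
    have h2 := series_upper hq hs.1 (hs.2.le.trans hs₀.2.le)
    have h3 := ENNReal.rpow_le_rpow h2 hq1.le
    rw [ENNReal.mul_rpow_of_nonneg _ _ hq1.le] at h3
    calc _ ≤ ENNReal.ofReal s ^ (1 / q) * _ := mul_le_mul' le_rfl h1
      _ = C * S₀ * ENNReal.ofReal s ^ (1 / q) + C * (ENNReal.ofReal s ^ (1 / q) *
          (∑' k : ℕ, ENNReal.ofReal (2 ^ k) ^ (-(s * q))) ^ (1 / q)) * N := by ring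
      _ ≤ _ := add_le_add le_rfl (mul_le_mul' (mul_le_mul' le_rfl h3) le_rfl)
  have ht0 : Tendsto (fun s : ℝ => ENNReal.ofReal s ^ (1 / q)) (𝓝[>] (0:ℝ)) (𝓝 0) := by
    have hc : Continuous fun s : ℝ => ENNReal.ofReal s ^ (1 / q) :=
      ENNReal.continuous_rpow_const.comp ENNReal.continuous_ofReal
    have := hc.tendsto 0
    simp only [ENNReal.ofReal_zero, ENNReal.zero_rpow_of_pos hq1] at this
    exact this.mono_left nhdsWithin_le_nhds
  have ht : Tendsto (fun s : ℝ => C * S₀ * ENNReal.ofReal s ^ (1 / q) + C * V * N)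
      (𝓝[>] (0:ℝ)) (𝓝 (C * V * N)) := by
    have h := (ENNReal.Tendsto.const_mul (a := C * S₀) ht0
      (Or.inr (ENNReal.mul_ne_top hCt hS₀.ne))).add_const (C * V * N)
    simpa using h
  have hl := limsup_le_limsup hev
  rw [ht.limsup_eq] at hl
  exact hl.trans (mul_le_mul' le_self_add le_rfl)

theorem statement19 [Nonempty X] (ρ : X → X → ℝ) (μ : Measure X) (K₀ : ℝ) (L : ℝ≥0∞)
    (hX : IsQuasiMetricMeasure ρ μ K₀) (hL : IsDoubling ρ μ L) (hWRD : WRD ρ μ)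
    (Ω : Set X) (hΩm : MeasurableSet Ω) (hΩo : IsRhoOpen ρ Ω) (hWMD : WMD ρ μ Ω)
    (p q : ℝ) (hq : 0 < q) (hqp : q < p)
    (φ : X → ℝ → ℝ) (hφpos : PhiPos φ) (hφG : GdecP ρ μ p φ) (hφN : Nearness ρ φ)
    (Cφ : ℝ) (hφI : PhiIntCond φ Cφ)
    (halt :
      (∃ C : ℝ, 1 ≤ C ∧ ∀ (x : X) (r : ℝ), 0 < r →
          ENNReal.ofReal (1 / C) ≤ ENNReal.ofReal (φ x r) * μ (ball ρ x r) ^ (1 / p) ∧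
          ENNReal.ofReal (φ x r) * μ (ball ρ x r) ^ (1 / p) ≤ ENNReal.ofReal C) ∨
        ((∀ (z : X) (R : ℝ), 0 < R → ∀ M : ℝ, ∃ δ : ℝ, 0 < δ ∧
            ∀ r : ℝ, 0 < r → r < δ → ∀ x ∈ ball ρ z R, M ≤ φ x r) ∧
          ∀ x : X,
            Tendsto (fun r : ℝ => ENNReal.ofReal (φ x r) * μ (ball ρ x r) ^ (1 / p))
              atTop (𝓝 ⊤))) :
    ∃ C C' : ℝ≥0, 0 < C ∧ 0 < C' ∧
      ∀ f : X → ℝ, Measurable f →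
        (⨅ a : ℝ, morreyNorm ρ μ p φ (Ω.indicator fun x => ENNReal.ofReal |f x + a|)) < ∞ →
        (∃ s₀ ∈ Set.Ioo (0:ℝ) 1, morreyNorm ρ μ p φ (Ω.indicator (sob ρ μ Ω f q s₀)) < ∞) →
        (C : ℝ≥0∞) * (⨅ a : ℝ, morreyNorm ρ μ p φ (Ω.indicator fun x => ENNReal.ofReal |f x + a|)) ≤
            liminf (fun s : ℝ => ENNReal.ofReal s ^ (1 / q) * morreyNorm ρ μ p φ (Ω.indicator (sob ρ μ Ω f q s)))
              (𝓝[>] (0:ℝ)) ∧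
          limsup (fun s : ℝ => ENNReal.ofReal s ^ (1 / q) * morreyNorm ρ μ p φ (Ω.indicator (sob ρ μ Ω f q s)))
              (𝓝[>] (0:ℝ)) ≤
            (C' : ℝ≥0∞) * (⨅ a : ℝ, morreyNorm ρ μ p φ (Ω.indicator fun x => ENNReal.ofReal |f x + a|)) := by
  obtain ⟨C₁, h1t, h10, h1⟩ := lower_main hX hL hWRD hΩm hWMD hq hqp hφpos hφG hφI
  obtain ⟨C₂, h2t, h20, h2⟩ := upper_main hX hL hΩm hq hqp hφpos hφG hφN
  refine ⟨C₁⁻¹.toNNReal, C₂.toNNReal, ?_, ?_, ?_⟩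
  · exact ENNReal.toNNReal_pos (ENNReal.inv_ne_zero.2 h1t) (ENNReal.inv_ne_top.2 h10)
  · exact ENNReal.toNNReal_pos h20 h2t
  intro f hf hfin ⟨s₀, hs₀, hS₀⟩
  rw [ENNReal.coe_toNNReal (ENNReal.inv_ne_top.2 h10), ENNReal.coe_toNNReal h2t]
  constructor
  · obtain ⟨a, ha⟩ := iInf_lt_iff.1 hfin
    have h := h1 (fun x => f x + a) (hf.add_const a) ha.ne
    simp only [sob_shift] at h
    rw [mul_comm, ← div_eq_mul_inv]
    apply ENNReal.div_le_of_le_mul'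
    exact (iInf_le _ a).trans h
  · rw [ENNReal.mul_iInf_of_ne h20 h2t]
    refine le_iInf fun a => ?_
    have h := h2 (fun x => f x + a) (hf.add_const a) s₀ hs₀
    simp only [sob_shift] at h
    exact h hS₀
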